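/- arXiv:1109.5526 — 2 statements merged into one kernel-verified Lean document; each statement's English description precedes it below -/
import Mathlib

section
/- There exists a constant c : ℕ such that for every n ≥ 1 and every T ≥ T_n, K(T) + c·(Nat.size n) ≥ n (every number T at least as large as the stabilization time T_n has Kolmogorov complexity at least n - O(log n)). -/
/-!
Let `L = K T`, suppose `n` exceeds `L` by more than the permitted amount, and let `M` be the largest
complexity of a number below `2 ^ n`. Since `T` is past the stabilization time, the least number `y`
that no code of length less than `M` outputs within `T` steps has `K y ≥ M`. From `T` and `M` this
`y` is computable, and the task is to give it a code with number below `2 ^ (M - 1)`.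

The binary constructors of `Code` roughly square code numbers (`grow N = 4 * N ^ 2 + 4`), so that
composing a code for `T` with a fixed program doubles the length, which is far too expensive. What
is used instead is a comparison of how much information codes can hold. The adaptive capacity `U N`
is the largest number of outputs of one query tree whose queries are answered by an unknown code
with number below `N`. It satisfies `U (grow N) ≤ 15 * U N ^ 2`, so `Lam N = log₂ (U N) + 6` at most
doubles when `N` is replaced by `grow N`. Since nested unbounded searches are trivial, a positive
proportion of the codes is redundant, and this proportion compounds: `log₂ (U (2 ^ L)) ≤ ρ * L + C`
with some `ρ < 1` (`exists_rate`).

Conversely, capacity is realized at single points (`exists_point`): for every `τ < 1` and all large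
`N` there is an input `x` at which the codes below `N` take so many positive values that the
logarithm `tau x N` of their number is at least `τ * Lam (N + 1)`. Holders (`exists_holder`) are
codes that carry data built from such values while computing a prescribed function. A chain of
holders, of sizes `grow^[i + q] N` for `i ≤ m`, has code number below `grow^[k] N` with
`k = q + m + 1` and carries almost `2 ^ k * tau x N` bits, up to a factor `θ` as close to `1` as
desired (`exists_chain_code_comp`, `logb_card_chain_ge`).

Choose `θ` and `τ` with `ρ ≤ θ * τ`. From `2 ^ n ≤ U (2 ^ M)` and
`Lam (2 ^ M) ≤ 2 ^ k * Lam (N + 1)` the chain carries at least `θ * τ * n ≥ ρ * L + C ≥ log₂ (U (2 ^ L))` bits. Numbers of complexity at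
most `L` and data of the chain are both enumerable, so matching the two enumerations
(`exists_onto_code`) makes some datum of the chain point to `T`, and the decoder (`exists_decoder`)
then outputs `y`. Passing from `N + 1` to `N` saves one bit (`two_mul_grow_iterate_le`), so the code
for `y` lies below `2 ^ (M - 1)`.
-/

open Nat.Partrec (Code)

/-- The length of a code: the number of binary digits of its code number. -/
def codeLength (e : Nat.Partrec.Code) : ℕ := Nat.size (Encodable.encode e)

/-- Plain Kolmogorov complexity of `x : ℕ`: the least `ℓ` such that some code `e`
of length `≤ ℓ` outputs `x` (on input `0`). -/
noncomputable def K (x : ℕ) : ℕ :=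
  sInf {ℓ : ℕ | ∃ e : Nat.Partrec.Code, codeLength e ≤ ℓ ∧ e.eval 0 = Part.some x}

/-- Time-bounded Kolmogorov complexity of `x : ℕ` with time bound `t`: the least `ℓ`
such that some code `e` of length `≤ ℓ` outputs `x` within `t` steps, and `⊤` if
there is no such code. -/
noncomputable def Kt (t : ℕ) (x : ℕ) : ℕ∞ :=
  sInf {ℓ : ℕ∞ | ∃ e : Nat.Partrec.Code,
    (codeLength e : ℕ∞) ≤ ℓ ∧ Nat.Partrec.Code.evaln t e 0 = some x}

/-- `Tn n`: the least time `T` at which the time-bounded complexity of all strings of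
length at most `n` (i.e. all `x < 2 ^ n`) equals the true complexity. -/
noncomputable def Tn (n : ℕ) : ℕ :=
  sInf {T : ℕ | ∀ x < 2 ^ n, Kt T x = (K x : ℕ∞)}

/-- `Tn' n`: the least time `T` at which the time-bounded complexity of all strings of
length at most `n` is at most twice the true complexity. -/
noncomputable def Tn' (n : ℕ) : ℕ :=
  sInf {T : ℕ | ∀ x < 2 ^ n, Kt T x ≤ 2 * (K x : ℕ∞)}

/-! ### Sizes of codes -/

/-- Codes with children of number below `N` have number below `grow N`. -/
def grow (N : ℕ) : ℕ := 4 * N ^ 2 + 4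

theorem grow_mono {M N : ℕ} (h : M ≤ N) : grow M ≤ grow N := by
  unfold grow; gcongr

noncomputable instance : DecidableEq Code := Classical.decEq _

/-- The codes whose number is below `N`. -/
noncomputable def below (N : ℕ) : Finset Code := (Finset.range N).image (Denumerable.ofNat Code)

theorem mem_below {N : ℕ} {e : Code} : e ∈ below N ↔ Encodable.encode e < N := by
  unfold below
  simp only [Finset.mem_image, Finset.mem_range]
  constructor
  · rintro ⟨i, hi, rfl⟩; simpa using hi
  · intro h; exact ⟨_, h, Denumerable.ofNat_encode e⟩

theorem below_mono {M N : ℕ} (h : M ≤ N) : below M ⊆ below N := fun _ he =>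
  mem_below.2 ((mem_below.1 he).trans_le h)

theorem card_below_le (N : ℕ) : (below N).card ≤ N := by
  unfold below
  simpa using Finset.card_image_le (s := Finset.range N) (f := Denumerable.ofNat Code)

theorem pair_lt_sq_iff {a b N : ℕ} : Nat.pair a b < N ^ 2 ↔ a < N ∧ b < N := by
  constructor
  · intro h
    have : max a b ^ 2 ≤ Nat.pair a b := by
      rw [Nat.pair]
      split_ifs with hab
      · rw [max_eq_right hab.le]; nlinarith
      · rw [max_eq_left (not_lt.1 hab)]; nlinarith
    have h2 : max a b < N := lt_of_pow_lt_pow_left₀ 2 (Nat.zero_le _) (this.trans_lt h)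
    omega
  · rintro ⟨ha, hb⟩
    exact (Nat.pair_lt_max_add_one_sq a b).trans_le (Nat.pow_le_pow_left (by omega) 2)

theorem encode_pair (f g : Code) : Encodable.encode (Code.pair f g) =
    4 * Nat.pair (Encodable.encode f) (Encodable.encode g) + 4 := by
  simp only [Code.encodeCode_eq, Code.encodeCode]; ring

theorem encode_comp (f g : Code) : Encodable.encode (Code.comp f g) =
    4 * Nat.pair (Encodable.encode f) (Encodable.encode g) + 6 := by
  simp only [Code.encodeCode_eq, Code.encodeCode]; ring

theorem encode_prec (f g : Code) : Encodable.encode (Code.prec f g) =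
    4 * Nat.pair (Encodable.encode f) (Encodable.encode g) + 5 := by
  simp only [Code.encodeCode_eq, Code.encodeCode]; ring

theorem encode_rfind (f : Code) : Encodable.encode (Code.rfind' f) =
    4 * Encodable.encode f + 7 := by
  simp only [Code.encodeCode_eq, Code.encodeCode]; ring

theorem pair_mem_below {N : ℕ} {f g : Code} :
    Code.pair f g ∈ below (grow N) ↔ f ∈ below N ∧ g ∈ below N := by
  simp only [mem_below, ← pair_lt_sq_iff, encode_pair, grow]; omega

theorem comp_mem_below {N : ℕ} {f g : Code} :
    Code.comp f g ∈ below (grow N) ↔ f ∈ below N ∧ g ∈ below N := by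
  simp only [mem_below, ← pair_lt_sq_iff, encode_comp, grow]; omega

theorem prec_mem_below {N : ℕ} {f g : Code} :
    Code.prec f g ∈ below (grow N) ↔ f ∈ below N ∧ g ∈ below N := by
  simp only [mem_below, ← pair_lt_sq_iff, encode_prec, grow]; omega

/-! ### Evaluation as an option -/

open Classical in
/-- The value of a code, as an option (`none` for divergence). -/
noncomputable def ev (e : Code) (q : ℕ) : Option ℕ := (e.eval q).toOption

theorem ev_eq_some {e : Code} {q y : ℕ} : ev e q = some y ↔ y ∈ e.eval q := by
  classical
  unfold ev
  rw [← Part.mem_toOption]; rfl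

theorem ev_pair {f g : Code} {q y : ℕ} : ev (Code.pair f g) q = some y ↔
    ∃ a b, ev f q = some a ∧ ev g q = some b ∧ y = Nat.pair a b := by
  simp only [ev_eq_some]
  have h : (Code.pair f g).eval q = Nat.pair <$> f.eval q <*> g.eval q := rfl
  rw [h]
  simp only [Seq.seq, Part.map_eq_map, Part.mem_bind_iff, Part.mem_map_iff]
  constructor
  · rintro ⟨_, ⟨a, ha, rfl⟩, b, hb, rfl⟩; exact ⟨a, b, ha, hb, rfl⟩
  · rintro ⟨a, b, ha, hb, rfl⟩; exact ⟨_, ⟨a, ha, rfl⟩, b, hb, rfl⟩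

theorem ev_comp {f g : Code} {q y : ℕ} : ev (Code.comp f g) q = some y ↔
    ∃ a, ev g q = some a ∧ ev f a = some y := by
  simp only [ev_eq_some]
  have h : (Code.comp f g).eval q = (g.eval q).bind f.eval := rfl
  rw [h]
  exact Part.mem_bind_iff

theorem ev_prec_zero {f g : Code} {a y : ℕ} : ev (Code.prec f g) (Nat.pair a 0) = some y ↔
    ev f a = some y := by
  simp only [ev_eq_some, Code.eval_prec_zero]

theorem ev_prec_succ {f g : Code} {a n y : ℕ} :
    ev (Code.prec f g) (Nat.pair a (n + 1)) = some y ↔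
    ∃ s, ev (Code.prec f g) (Nat.pair a n) = some s ∧
      ev g (Nat.pair a (Nat.pair n s)) = some y := by
  simp only [ev_eq_some]
  rw [← Nat.succ_eq_add_one, Code.eval_prec_succ]
  simp

theorem ev_rfind {f : Code} {a m y : ℕ} (h : ev (Code.rfind' f) (Nat.pair a m) = some y) :
    m ≤ y ∧ ev f (Nat.pair a y) = some 0 ∧
      ∀ k, m ≤ k → k < y → ∃ v, v ≠ 0 ∧ ev f (Nat.pair a k) = some v := by
  simp only [ev_eq_some, Code.eval, Nat.unpaired, Nat.unpair_pair, Part.mem_map_iff] at h ⊢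
  obtain ⟨n, hn, rfl⟩ := h
  obtain ⟨h1, h2⟩ := Nat.mem_rfind.1 hn
  refine ⟨by omega, ?_, fun k hk hk' => ?_⟩
  · simpa using h1
  · obtain ⟨v, hv, hv0⟩ := (Part.mem_map_iff _).1 (h2 (m := k - m) (by omega))
    rw [Nat.sub_add_cancel hk] at hv
    exact ⟨v, by simpa using hv0, hv⟩

/-! ### Query trees and the adaptive capacity of a family -/

/-- A decision tree that asks oracle questions of type `Q`, branches on the numerical answers
and finally outputs a number. -/
inductive QTree (Q : Type) : Type
  | leaf (o : ℕ) : QTree Q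
  | ask (q : Q) (k : ℕ → QTree Q) : QTree Q

namespace QTree

variable {Q Q' ι ι' : Type}

/-- The output of a tree run against a partial oracle; `none` if some question diverges. -/
def run (f : Q → Option ℕ) : QTree Q → Option ℕ
  | leaf o => some o
  | ask q k => (f q).bind fun y => run f (k y)

/-- Sequential composition of trees. -/
def seq : QTree Q → (ℕ → QTree Q) → QTree Q
  | leaf o, k => k o
  | ask q k', k => ask q fun y => seq (k' y) k

theorem run_seq (f : Q → Option ℕ) (t : QTree Q) (k : ℕ → QTree Q) :
    (t.seq k).run f = (t.run f).bind fun m => (k m).run f := by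
  induction t with
  | leaf o => rfl
  | ask q k' ih =>
    simp only [seq, run]
    cases f q with
    | none => rfl
    | some y => simpa using ih y

/-- Replace every question of a tree by a subtree that computes its answer. -/
def subst (sim : Q' → QTree Q) : QTree Q' → QTree Q
  | leaf o => leaf o
  | ask q k => (sim q).seq fun y => subst sim (k y)

theorem run_subst {f' : Q' → Option ℕ} {f : Q → Option ℕ} {sim : Q' → QTree Q}
    (h : ∀ q y, f' q = some y → (sim q).run f = some y) (t : QTree Q') {o : ℕ}
    (ht : t.run f' = some o) : (t.subst sim).run f = some o := by
  induction t with
  | leaf o' => exact ht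
  | ask q k ih =>
    simp only [run, Option.bind_eq_some_iff] at ht
    obtain ⟨y, hy, hk⟩ := ht
    simp only [subst, run_seq, h q y hy, Option.bind_some]
    exact ih y hk

/-- All outputs of a tree over a finite family of oracles. -/
noncomputable def outs (ev : ι → Q → Option ℕ) (F : Finset ι) (t : QTree Q) : Finset ℕ :=
  F.biUnion fun i => (t.run (ev i)).toFinset

theorem mem_outs {ev : ι → Q → Option ℕ} {F : Finset ι} {t : QTree Q} {o : ℕ} :
    o ∈ outs ev F t ↔ ∃ i ∈ F, t.run (ev i) = some o := by
  simp [outs]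

theorem card_outs_le (ev : ι → Q → Option ℕ) (F : Finset ι) (t : QTree Q) :
    (outs ev F t).card ≤ F.card := by
  refine Finset.card_biUnion_le.trans ?_
  refine (Finset.sum_le_card_nsmul F _ 1 fun i _ => ?_).trans (by simp)
  cases t.run (ev i) <;> simp

/-- The adaptive capacity of a family of oracles: the largest number of distinct outputs that a
single tree has over the family. -/
noncomputable def cap (ev : ι → Q → Option ℕ) (F : Finset ι) : ℕ :=
  sSup (Set.range fun t : QTree Q => (outs ev F t).card)

theorem bddAbove_outs (ev : ι → Q → Option ℕ) (F : Finset ι) :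
    BddAbove (Set.range fun t : QTree Q => (outs ev F t).card) :=
  ⟨F.card, by rintro _ ⟨t, rfl⟩; exact card_outs_le ev F t⟩

theorem card_outs_le_cap (ev : ι → Q → Option ℕ) (F : Finset ι) (t : QTree Q) :
    (outs ev F t).card ≤ cap ev F :=
  le_csSup (bddAbove_outs ev F) ⟨t, rfl⟩

theorem cap_le {ev : ι → Q → Option ℕ} {F : Finset ι} {u : ℕ}
    (h : ∀ t : QTree Q, (outs ev F t).card ≤ u) : cap ev F ≤ u :=
  csSup_le (Set.range_nonempty_iff_nonempty.2 ⟨leaf 0⟩) (by rintro _ ⟨t, rfl⟩; exact h t)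

theorem exists_cap (ev : ι → Q → Option ℕ) (F : Finset ι) :
    ∃ t : QTree Q, (outs ev F t).card = cap ev F :=
  Nat.sSup_mem (Set.range_nonempty_iff_nonempty.2 ⟨leaf 0⟩) (bddAbove_outs ev F)

theorem cap_le_card (ev : ι → Q → Option ℕ) (F : Finset ι) : cap ev F ≤ F.card :=
  cap_le (card_outs_le ev F)

theorem cap_mono {ev : ι → Q → Option ℕ} {F G : Finset ι} (h : F ⊆ G) : cap ev F ≤ cap ev G :=
  cap_le fun t => (Finset.card_le_card (Finset.biUnion_subset_biUnion_of_subset_left _ h)).trans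
    (card_outs_le_cap ev G t)

theorem cap_union_le [DecidableEq ι] (ev : ι → Q → Option ℕ) (F G : Finset ι) :
    cap ev (F ∪ G) ≤ cap ev F + cap ev G := by
  refine cap_le fun t => ?_
  have : outs ev (F ∪ G) t = outs ev F t ∪ outs ev G t := by
    ext o; simp only [mem_outs, Finset.mem_union]; grind
  rw [this]
  exact (Finset.card_union_le _ _).trans
    (add_le_add (card_outs_le_cap ev F t) (card_outs_le_cap ev G t))

theorem one_le_cap {ev : ι → Q → Option ℕ} {F : Finset ι} (h : F.Nonempty) : 1 ≤ cap ev F := by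
  refine le_trans ?_ (card_outs_le_cap ev F (leaf 0))
  obtain ⟨i, hi⟩ := h
  exact Finset.card_pos.2 ⟨0, mem_outs.2 ⟨i, hi, rfl⟩⟩

/-- A family that can be simulated, question by question, has smaller capacity. -/
theorem cap_le_of_sim {ev' : ι' → Q' → Option ℕ} {ev : ι → Q → Option ℕ} {F' : Finset ι'}
    {F : Finset ι} (sim : Q' → QTree Q)
    (h : ∀ i' ∈ F', ∃ i ∈ F, ∀ q y, ev' i' q = some y → (sim q).run (ev i) = some y) :
    cap ev' F' ≤ cap ev F := by
  refine cap_le fun t => le_trans (Finset.card_le_card ?_) (card_outs_le_cap ev F (t.subst sim))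
  intro o ho
  obtain ⟨i', hi', hr⟩ := mem_outs.1 ho
  obtain ⟨i, hi, hs⟩ := h i' hi'
  exact mem_outs.2 ⟨i, hi, run_subst hs t hr⟩

/-- The oracles of the family that answer `y` to the question `q`. -/
noncomputable def fiber (ev : ι → Q → Option ℕ) (F : Finset ι) (q : Q) (y : ℕ) : Finset ι :=
  F.filter fun i => ev i q = some y

/-- A first question splits a family into fibers whose capacities add up, because the answer to
the first question can be made part of the output. -/
theorem sum_cap_fiber_le (ev : ι → Q → Option ℕ) (F : Finset ι) (q : Q) (Y : Finset ℕ) :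
    ∑ y ∈ Y, cap ev (fiber ev F q y) ≤ cap ev F := by
  choose t ht using fun y => exists_cap ev (fiber ev F q y)
  refine le_trans ?_
    (card_outs_le_cap ev F (ask q fun y => (t y).seq fun o => leaf (Nat.pair y o)))
  have hc : ∑ y ∈ Y, cap ev (fiber ev F q y) =
      (Y.sigma fun y => outs ev (fiber ev F q y) (t y)).card := by
    rw [Finset.card_sigma]; exact Finset.sum_congr rfl fun y _ => (ht y).symm
  rw [hc]
  refine Finset.card_le_card_of_injOn (fun p => Nat.pair p.1 p.2) ?_ ?_
  · rintro ⟨y, o⟩ h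
    simp only [Finset.coe_sigma, Set.mem_sigma_iff, Finset.mem_coe, mem_outs, fiber,
      Finset.mem_filter] at h
    obtain ⟨-, i, ⟨hi, hq⟩, hr⟩ := h
    refine mem_outs.2 ⟨i, hi, ?_⟩
    simp [run, hq, run_seq, hr]
  · rintro ⟨y, o⟩ _ ⟨y', o'⟩ _ h
    simp only [Nat.pair_eq_pair] at h
    obtain ⟨rfl, rfl⟩ := h
    rfl

/-- Two independent oracles, asked through a sum of question types. -/
def prodEv (ev : ι → Q → Option ℕ) (ev' : ι' → Q' → Option ℕ) (p : ι × ι') :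
    Q ⊕ Q' → Option ℕ := Sum.elim (ev p.1) (ev' p.2)

/-- Capacity is submultiplicative for pairs of oracles. -/
theorem cap_prod_le (ev : ι → Q → Option ℕ) (ev' : ι' → Q' → Option ℕ) (F : Finset ι)
    (G : Finset ι') : cap (prodEv ev ev') (F ×ˢ G) ≤ cap ev F * cap ev' G := by
  refine cap_le fun t => ?_
  induction t generalizing F G with
  | leaf o =>
    rcases F.eq_empty_or_nonempty with rfl | hF
    · simp [outs]
    rcases G.eq_empty_or_nonempty with rfl | hG
    · simp [outs]
    refine le_trans ?_ (Nat.mul_le_mul (one_le_cap hF) (one_le_cap hG))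
    refine Finset.card_le_one.2 fun a ha b hb => ?_
    obtain ⟨_, _, h1⟩ := mem_outs.1 ha
    obtain ⟨_, _, h2⟩ := mem_outs.1 hb
    exact Option.some.inj (h1.symm.trans h2)
  | ask q k ih =>
    rcases q with q | q
    · have hsub : outs (prodEv ev ev') (F ×ˢ G) (ask (Sum.inl q) k) ⊆
          (F.biUnion fun i => (ev i q).toFinset).biUnion
            fun y => outs (prodEv ev ev') (fiber ev F q y ×ˢ G) (k y) := by
        intro o ho
        obtain ⟨⟨i, j⟩, hij, hr⟩ := mem_outs.1 ho
        simp only [run, Option.bind_eq_some_iff, prodEv, Sum.elim_inl] at hr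
        obtain ⟨y, hy, hr⟩ := hr
        obtain ⟨hi, hj⟩ := Finset.mem_product.1 hij
        refine Finset.mem_biUnion.2 ⟨y, Finset.mem_biUnion.2 ⟨i, hi, by simpa using hy⟩, ?_⟩
        exact mem_outs.2 ⟨(i, j), Finset.mem_product.2
          ⟨Finset.mem_filter.2 ⟨hi, hy⟩, hj⟩, hr⟩
      refine (Finset.card_le_card hsub).trans (Finset.card_biUnion_le.trans ?_)
      refine (Finset.sum_le_sum fun y _ => ih y (fiber ev F q y) G).trans ?_
      rw [← Finset.sum_mul]
      exact Nat.mul_le_mul_right _ (sum_cap_fiber_le ev F q _)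
    · have hsub : outs (prodEv ev ev') (F ×ˢ G) (ask (Sum.inr q) k) ⊆
          (G.biUnion fun i => (ev' i q).toFinset).biUnion
            fun y => outs (prodEv ev ev') (F ×ˢ fiber ev' G q y) (k y) := by
        intro o ho
        obtain ⟨⟨i, j⟩, hij, hr⟩ := mem_outs.1 ho
        simp only [run, Option.bind_eq_some_iff, prodEv, Sum.elim_inr] at hr
        obtain ⟨y, hy, hr⟩ := hr
        obtain ⟨hi, hj⟩ := Finset.mem_product.1 hij
        refine Finset.mem_biUnion.2 ⟨y, Finset.mem_biUnion.2 ⟨j, hj, by simpa using hy⟩, ?_⟩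
        exact mem_outs.2 ⟨(i, j), Finset.mem_product.2
          ⟨hi, Finset.mem_filter.2 ⟨hj, hy⟩⟩, hr⟩
      refine (Finset.card_le_card hsub).trans (Finset.card_biUnion_le.trans ?_)
      refine (Finset.sum_le_sum fun y _ => ih y F (fiber ev' G q y)).trans ?_
      rw [← Finset.mul_sum]
      exact Nat.mul_le_mul_left _ (sum_cap_fiber_le ev' G q _)

end QTree

/-! ### Capacity of the codes below a bound -/

open QTree

/-- The adaptive capacity of the family of codes with number below `N`. -/
noncomputable def U (N : ℕ) : ℕ := cap ev (below N)

theorem U_mono {M N : ℕ} (h : M ≤ N) : U M ≤ U N := cap_mono (below_mono h)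

theorem U_le (N : ℕ) : U N ≤ N := (cap_le_card _ _).trans (card_below_le N)

theorem U_pos {N : ℕ} (h : 1 ≤ N) : 1 ≤ U N :=
  one_le_cap ⟨Code.zero, mem_below.2 (by simp [Code.encodeCode_eq, Code.encodeCode]; omega)⟩

theorem U_succ_le {N : ℕ} (h : 1 ≤ N) : U (N + 1) ≤ 2 * U N := by
  have h1 : below (N + 1) ⊆ below N ∪ {Denumerable.ofNat Code N} := by
    intro e he
    rw [mem_below] at he
    rw [Finset.mem_union, mem_below, Finset.mem_singleton]
    rcases Nat.lt_succ_iff_lt_or_eq.1 he with h | h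
    · exact Or.inl h
    · exact Or.inr (by rw [← h, Denumerable.ofNat_encode])
  have h2 := (cap_mono (ev := ev) h1).trans (cap_union_le _ _ _)
  have h3 := cap_le_card ev ({Denumerable.ofNat Code N} : Finset Code)
  have h4 := U_pos h
  simp only [Finset.card_singleton] at h3
  unfold U at *
  omega

theorem cap_pair_le (F G : Finset Code) :
    cap ev ((F ×ˢ G).image fun p => Code.pair p.1 p.2) ≤ cap ev F * cap ev G := by
  refine le_trans (cap_le_of_sim (fun q => ask (Sum.inl q) fun a => ask (Sum.inr q) fun b =>
    leaf (Nat.pair a b)) fun e he => ?_) (cap_prod_le ev ev F G)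
  obtain ⟨p, hp, rfl⟩ := Finset.mem_image.1 he
  refine ⟨p, hp, fun q y h => ?_⟩
  obtain ⟨a, b, ha, hb, rfl⟩ := ev_pair.1 h
  simp [run, prodEv, ha, hb]

theorem cap_comp_le (F G : Finset Code) :
    cap ev ((F ×ˢ G).image fun p => Code.comp p.1 p.2) ≤ cap ev F * cap ev G := by
  refine le_trans (cap_le_of_sim (fun q => ask (Sum.inr q) fun a => ask (Sum.inl a) leaf)
    fun e he => ?_) (cap_prod_le ev ev F G)
  obtain ⟨p, hp, rfl⟩ := Finset.mem_image.1 he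
  refine ⟨p, hp, fun q y h => ?_⟩
  obtain ⟨a, ha, hb⟩ := ev_comp.1 h
  simp [run, prodEv, ha, hb]

/-- The tree computing a primitive recursion with parameter `a` up to `n`. -/
def precTree (a : ℕ) : ℕ → QTree (ℕ ⊕ ℕ)
  | 0 => ask (Sum.inl a) leaf
  | n + 1 => (precTree a n).seq fun s => ask (Sum.inr (Nat.pair a (Nat.pair n s))) leaf

theorem cap_prec_le (F G : Finset Code) :
    cap ev ((F ×ˢ G).image fun p => Code.prec p.1 p.2) ≤ cap ev F * cap ev G := by
  refine le_trans (cap_le_of_sim (fun q => precTree q.unpair.1 q.unpair.2)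
    fun e he => ?_) (cap_prod_le ev ev F G)
  obtain ⟨p, hp, rfl⟩ := Finset.mem_image.1 he
  refine ⟨p, hp, fun q y h => ?_⟩
  rw [← Nat.pair_unpair q] at h
  generalize q.unpair.1 = a at *
  generalize q.unpair.2 = n at *
  induction n generalizing y with
  | zero => simp [precTree, run, prodEv, ev_prec_zero.1 h]
  | succ n ih =>
    obtain ⟨s, hs, hy⟩ := ev_prec_succ.1 h
    simp only [precTree, run_seq, ih s hs, Option.bind_some]
    simp [run, prodEv, hy]

/-- The tree searching for a zero at `(a, m), (a, m + 1), …` with bounded fuel. -/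
def rfindTree (a : ℕ) : ℕ → ℕ → QTree ℕ
  | 0, _ => leaf 0
  | k + 1, m => ask (Nat.pair a m) fun y => if y = 0 then leaf m else rfindTree a k (m + 1)

theorem run_rfindTree {f : Code} {a k m y : ℕ} (hm : m ≤ y) (hk : y < m + k)
    (h0 : ev f (Nat.pair a y) = some 0)
    (h : ∀ i, m ≤ i → i < y → ∃ v, v ≠ 0 ∧ ev f (Nat.pair a i) = some v) :
    (rfindTree a k m).run (ev f) = some y := by
  induction k generalizing m with
  | zero => omega
  | succ k ih =>
    rcases hm.eq_or_lt with rfl | hlt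
    · simp [rfindTree, run, h0]
    · obtain ⟨v, hv, hv'⟩ := h m le_rfl hlt
      simp only [rfindTree, run, hv', Option.bind_some, if_neg hv]
      exact ih hlt (by omega) fun i hi hi' => h i (by omega) hi'

theorem cap_rfind_le (F : Finset Code) : cap ev (F.image Code.rfind') ≤ cap ev F := by
  refine cap_le_of_sim (fun q => rfindTree q.unpair.1
    (F.sup (fun f => (ev (Code.rfind' f) q).getD 0) + 1) q.unpair.2) fun e he => ?_
  obtain ⟨f, hf, rfl⟩ := Finset.mem_image.1 he
  refine ⟨f, hf, fun q y h => ?_⟩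
  have hb : y ≤ F.sup fun f => (ev (Code.rfind' f) q).getD 0 := by
    refine le_trans ?_ (Finset.le_sup hf)
    simp [h]
  rw [← Nat.pair_unpair q] at h
  obtain ⟨h1, h2, h3⟩ := ev_rfind h
  exact run_rfindTree h1 (by omega) h2 h3

/-- Two nested unbounded searches can only return `0`, since the inner one on `(a, m)` returns at
least `m`. -/
theorem cap_rfind_rfind_le (F : Finset Code) :
    cap ev (F.image fun f => Code.rfind' (Code.rfind' f)) ≤ 1 := by
  refine le_trans (cap_le_of_sim (ev := fun (_ : Unit) (_ : ℕ) => some 0) (F := {()})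
    (fun _ => leaf 0) fun e he => ?_) ((cap_le_card _ _).trans (by simp))
  obtain ⟨f, hf, rfl⟩ := Finset.mem_image.1 he
  refine ⟨(), by simp, fun q y h => ?_⟩
  rw [← Nat.pair_unpair q] at h
  obtain ⟨h1, h2, -⟩ := ev_rfind h
  obtain ⟨h3, -, -⟩ := ev_rfind h2
  obtain rfl : y = 0 := by omega
  rfl

/-- The codes that are basic functions. -/
noncomputable def baseCodes : Finset Code := {Code.zero, Code.succ, Code.left, Code.right}

/-- The codes of a binary constructor with children below `N`. -/
noncomputable def binCodes (N : ℕ) : Finset Code :=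
  ((below N ×ˢ below N).image fun p => Code.pair p.1 p.2) ∪
  (((below N ×ˢ below N).image fun p => Code.comp p.1 p.2) ∪
  ((below N ×ˢ below N).image fun p => Code.prec p.1 p.2))

theorem cap_binCodes_le (N : ℕ) : cap ev (binCodes N) ≤ 3 * U N ^ 2 := by
  have h1 := cap_pair_le (below N) (below N)
  have h2 := cap_comp_le (below N) (below N)
  have h3 := cap_prec_le (below N) (below N)
  have h4 := cap_union_le ev ((below N ×ˢ below N).image fun p => Code.pair p.1 p.2)
    (((below N ×ˢ below N).image fun p => Code.comp p.1 p.2) ∪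
      ((below N ×ˢ below N).image fun p => Code.prec p.1 p.2))
  have h5 := cap_union_le ev ((below N ×ˢ below N).image fun p => Code.comp p.1 p.2)
      ((below N ×ˢ below N).image fun p => Code.prec p.1 p.2)
  unfold binCodes U
  rw [pow_two]
  omega

theorem cap_baseCodes_le : cap ev baseCodes ≤ 4 :=
  (cap_le_card _ _).trans Finset.card_le_four

/-- The recursive bound on the capacity: a code below `grow N` is basic, binary with children
below `N`, or an unbounded search over a code below `N ^ 2`; the latter is again basic, binary
with children below `N / 2 + 1`, or a nested search. -/
theorem U_grow_le (N : ℕ) : U (grow N) ≤ 9 + 3 * U N ^ 2 + 3 * U (N / 2 + 1) ^ 2 := by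
  set R1 := (baseCodes ∪ binCodes (N / 2 + 1)).image Code.rfind' with hR1
  set R2 := (below (N ^ 2)).image fun f => Code.rfind' (Code.rfind' f) with hR2
  have hsub : below (grow N) ⊆ (baseCodes ∪ binCodes N) ∪ (R1 ∪ R2) := by
    intro e he
    have hbin : ∀ f g : Code, ∀ i : ℕ,
        4 * Nat.pair (Encodable.encode f) (Encodable.encode g) + 4 + i < N ^ 2 →
        f ∈ below (N / 2 + 1) ∧ g ∈ below (N / 2 + 1) := by
      intro f g i h
      rw [mem_below, mem_below]
      refine pair_lt_sq_iff.1 ?_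
      have : N ^ 2 ≤ 4 * (N / 2 + 1) ^ 2 := by
        calc N ^ 2 ≤ (2 * (N / 2 + 1)) ^ 2 := Nat.pow_le_pow_left (by omega) 2
          _ = _ := by ring
      omega
    have hrf : ∀ f : Code, Code.rfind' f ∈ below (grow N) → f ∈ below (N ^ 2) := by
      intro f h
      rw [mem_below, encode_rfind] at h
      rw [mem_below]
      unfold grow at h
      omega
    simp only [Finset.mem_union, hR1, hR2, Finset.mem_image, binCodes, baseCodes,
      Finset.mem_insert, Finset.mem_singleton, Finset.mem_product, Prod.exists]
    cases e with
    | zero => simp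
    | succ => simp
    | left => simp
    | right => simp
    | pair f g => have := pair_mem_below.1 he; grind
    | comp f g => have := comp_mem_below.1 he; grind
    | prec f g => have := prec_mem_below.1 he; grind
    | rfind' f =>
      have hf := hrf f he
      right
      cases f with
      | zero => simp
      | succ => simp
      | left => simp
      | right => simp
      | pair f g =>
        rw [mem_below, encode_pair] at hf
        have := hbin f g 0 (by omega)
        left; exact ⟨_, Or.inr (Or.inl ⟨f, g, this, rfl⟩), rfl⟩
      | comp f g =>
        rw [mem_below, encode_comp] at hf
        have := hbin f g 2 (by omega)
        left; exact ⟨_, Or.inr (Or.inr (Or.inl ⟨f, g, this, rfl⟩)), rfl⟩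
      | prec f g =>
        rw [mem_below, encode_prec] at hf
        have := hbin f g 1 (by omega)
        left; exact ⟨_, Or.inr (Or.inr (Or.inr ⟨f, g, this, rfl⟩)), rfl⟩
      | rfind' f =>
        right
        refine ⟨f, ?_, rfl⟩
        rw [mem_below, encode_rfind] at hf
        rw [mem_below]; omega
  have h1 := cap_mono (ev := ev) hsub
  have h2 := cap_union_le ev (baseCodes ∪ binCodes N) (R1 ∪ R2)
  have h3 := cap_union_le ev R1 R2
  have h4 := cap_union_le ev baseCodes (binCodes N)
  have h5 : cap ev R1 ≤ _ := cap_rfind_le (baseCodes ∪ binCodes (N / 2 + 1))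
  have h6 := cap_union_le ev baseCodes (binCodes (N / 2 + 1))
  have h7 : cap ev R2 ≤ _ := cap_rfind_rfind_le (below (N ^ 2))
  have h8 := cap_binCodes_le N
  have h9 := cap_binCodes_le (N / 2 + 1)
  have h10 := cap_baseCodes_le
  have : U (grow N) = cap ev (below (grow N)) := rfl
  omega

theorem U_grow_le' {N : ℕ} (hN : 2 ≤ N) : U (grow N) ≤ 15 * U N ^ 2 := by
  have h := U_grow_le N
  have h1 : U (N / 2 + 1) ^ 2 ≤ U N ^ 2 := Nat.pow_le_pow_left (U_mono (by omega)) 2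
  have h2 : 1 ≤ U N ^ 2 := Nat.one_le_pow _ _ (U_pos (by omega))
  omega

theorem U_unbounded (m : ℕ) : ∃ B, ∀ N, B ≤ N → m ≤ U N := by
  refine ⟨(Finset.range m).sup (fun i => Encodable.encode (Code.const i)) + 1, fun N hN => ?_⟩
  refine le_trans ?_ (card_outs_le_cap ev (below N) (ask 0 leaf))
  have : Finset.range m ⊆ outs ev (below N) (ask 0 leaf) := by
    intro i hi
    refine mem_outs.2 ⟨Code.const i, mem_below.2 ?_, ?_⟩
    · have := Finset.le_sup (f := fun i => Encodable.encode (Code.const i)) hi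
      omega
    · have : ev (Code.const i) 0 = some i := ev_eq_some.2 (by rw [Code.eval_const]; simp)
      simp [run, this]
  simpa using Finset.card_le_card this

/-! ### Growth of the capacity -/

/-- The largest `m` with `grow m ≤ N` (for `4 ≤ N`). -/
def root (N : ℕ) : ℕ := Nat.sqrt ((N - 4) / 4)

theorem grow_root_le {N : ℕ} (h : 4 ≤ N) : grow (root N) ≤ N := by
  have := Nat.sqrt_le' ((N - 4) / 4)
  unfold grow root; omega

theorem lt_grow_root (N : ℕ) : N < grow (root N + 1) := by
  have := Nat.lt_succ_sqrt' ((N - 4) / 4)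
  unfold grow root
  simp only [Nat.succ_eq_add_one] at this
  omega

theorem lt_grow (N : ℕ) : N < grow N := by unfold grow; nlinarith

theorem grow_strictMono : StrictMono grow := by
  intro a b h
  unfold grow
  have := Nat.pow_lt_pow_left h (n := 2) (by norm_num)
  omega

theorem le_root {m N : ℕ} (h : grow m ≤ N) : m ≤ root N := by
  have := h.trans_lt (lt_grow_root N)
  have := grow_strictMono.lt_iff_lt.1 this
  omega

theorem root_lt {N : ℕ} (h : 4 ≤ N) : root N < N := (lt_grow _).trans_le (grow_root_le h)

/-- Bounding the capacity of the binary codes by that of their two arguments squares the density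
`δ`; the factor `0.95` comes from the trivial codes `rfind' (rfind' f)`. -/
theorem density_step {δ : ℝ} (hδ : 0 < δ)
    (h : ∃ B : ℕ, ∀ N, B ≤ N → (U N : ℝ) ≤ δ * N) :
    ∃ B : ℕ, ∀ N, B ≤ N → (U N : ℝ) ≤ 0.95 * δ ^ 2 * N := by
  obtain ⟨B, hB⟩ := h
  obtain ⟨c, hc⟩ := exists_nat_ge (9 / δ ^ 2)
  refine ⟨grow (2 * B + 500 + c), fun N hN => ?_⟩
  set m := root N with hm
  have hmB : 2 * B + 500 + c ≤ m := le_root hN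
  have hN4 : 4 ≤ N := le_trans (by unfold grow; omega) hN
  have h1 : U N ≤ U (grow (m + 1)) := U_mono (lt_grow_root N).le
  have h2 := U_grow_le (m + 1)
  have h3 := hB (m + 1) (by omega)
  have h4 := hB ((m + 1) / 2 + 1) (by omega)
  have h5 : (4 * (m : ℝ) ^ 2) ≤ N := by
    have := grow_root_le hN4
    rw [← hm] at this; unfold grow at this
    exact_mod_cast (by omega : 4 * m ^ 2 ≤ N)
  have h6 : (((m + 1) / 2 + 1 : ℕ) : ℝ) ≤ ((m : ℝ) + 3) / 2 := by
    have : 2 * ((m + 1) / 2 + 1) ≤ m + 3 := by omega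
    have : (2 * ((m + 1) / 2 + 1 : ℕ) : ℝ) ≤ m + 3 := by exact_mod_cast this
    linarith
  have h7 : (U N : ℝ) ≤ 9 + 3 * (U (m + 1) : ℝ) ^ 2 + 3 * (U ((m + 1) / 2 + 1) : ℝ) ^ 2 := by
    exact_mod_cast h1.trans h2
  have h8 : (U (m + 1) : ℝ) ^ 2 ≤ δ ^ 2 * (m + 1) ^ 2 := by
    rw [← mul_pow]; push_cast at h3; gcongr
  have h9 : (U ((m + 1) / 2 + 1) : ℝ) ^ 2 ≤ δ ^ 2 * (((m : ℝ) + 3) / 2) ^ 2 := by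
    rw [← mul_pow]; gcongr; exact h4.trans (by gcongr)
  have hmR : (500 : ℝ) + c ≤ m := by exact_mod_cast (by omega : 500 + c ≤ m)
  have h10 : 9 ≤ δ ^ 2 * c := by
    have := (div_le_iff₀ (by positivity : 0 < δ ^ 2)).1 hc
    linarith
  have h11 : δ ^ 2 * (c + 3 * (m + 1) ^ 2 + 3 * (((m : ℝ) + 3) / 2) ^ 2) ≤
      δ ^ 2 * (0.95 * (4 * (m : ℝ) ^ 2)) := by
    refine mul_le_mul_of_nonneg_left ?_ (by positivity)
    nlinarith
  have h12 : δ ^ 2 * (0.95 * (4 * (m : ℝ) ^ 2)) ≤ δ ^ 2 * (0.95 * N) := by gcongr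
  nlinarith

/-- The factor `0.95` in `density_step` starts the descent from the trivial bound `U N ≤ N`, and the
squaring then drives the density down quickly. -/
theorem density : ∃ B : ℕ, ∀ N, B ≤ N → (U N : ℝ) ≤ 1 / 128 * N := by
  have step : ∀ δ δ' : ℝ, 0 < δ → 0.95 * δ ^ 2 ≤ δ' →
      (∃ B : ℕ, ∀ N, B ≤ N → (U N : ℝ) ≤ δ * N) →
      ∃ B : ℕ, ∀ N, B ≤ N → (U N : ℝ) ≤ δ' * N := by
    intro δ δ' hδ hd h
    obtain ⟨B, hB⟩ := density_step hδ h
    exact ⟨B, fun N hN => (hB N hN).trans (by gcongr)⟩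
  have h0 : ∃ B : ℕ, ∀ N, B ≤ N → (U N : ℝ) ≤ 1 * N :=
    ⟨0, fun N _ => by rw [one_mul]; exact_mod_cast U_le N⟩
  have h1 := step 1 0.95 (by norm_num) (by norm_num) h0
  have h2 := step _ 0.86 (by norm_num) (by norm_num) h1
  have h3 := step _ 0.71 (by norm_num) (by norm_num) h2
  have h4 := step _ 0.48 (by norm_num) (by norm_num) h3
  have h5 := step _ 0.22 (by norm_num) (by norm_num) h4
  have h6 := step _ 0.046 (by norm_num) (by norm_num) h5
  exact step _ _ (by norm_num) (by norm_num) h6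

/-- The logarithmic capacity, normalized by a constant so that it at most doubles when `N` is
replaced by `grow N`. -/
noncomputable def Lam (N : ℕ) : ℝ := Real.logb 2 (U N) + 6

theorem Lam_ge {N : ℕ} (h : 1 ≤ N) : 6 ≤ Lam N := by
  have : 0 ≤ Real.logb 2 (U N) :=
    Real.logb_nonneg (by norm_num) (by exact_mod_cast U_pos h)
  unfold Lam; linarith

theorem Lam_mono {M N : ℕ} (hM : 1 ≤ M) (h : M ≤ N) : Lam M ≤ Lam N := by
  unfold Lam
  have h1 : (0 : ℝ) < U M := by exact_mod_cast U_pos hM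
  have h2 : (U M : ℝ) ≤ U N := by exact_mod_cast U_mono h
  have := Real.logb_le_logb_of_le (b := 2) (by norm_num) h1 h2
  linarith

theorem Lam_le_two_mul {m N : ℕ} (hm : 1 ≤ m) (hN : 1 ≤ N) (h : N ≤ grow (m + 1)) :
    Lam N ≤ 2 * Lam m := by
  have h1 := (U_mono h).trans (U_grow_le' (by omega))
  have h2 := U_succ_le hm
  have h3 : U N ≤ 64 * U m ^ 2 := by nlinarith
  have hp : (0 : ℝ) < U m := by exact_mod_cast U_pos hm
  have hp' : (0 : ℝ) < U N := by exact_mod_cast U_pos hN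
  have h4 : (U N : ℝ) ≤ 2 ^ 6 * (U m : ℝ) ^ 2 := by norm_num; exact_mod_cast h3
  have h5 := Real.logb_le_logb_of_le (b := 2) (by norm_num) hp' h4
  rw [Real.logb_mul (by positivity) (by positivity), Real.logb_pow, Real.logb_pow,
    Real.logb_self_eq_one (by norm_num)] at h5
  unfold Lam
  norm_num at h5
  linarith

theorem Lam_succ_le {N : ℕ} (h : 1 ≤ N) : Lam (N + 1) ≤ Lam N + 1 := by
  have h3 := U_succ_le h
  have hp : (0 : ℝ) < U N := by exact_mod_cast U_pos h
  have hp' : (0 : ℝ) < U (N + 1) := by exact_mod_cast U_pos (by omega : 1 ≤ N + 1)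
  have h4 : (U (N + 1) : ℝ) ≤ 2 * (U N : ℝ) := by exact_mod_cast h3
  have h5 := Real.logb_le_logb_of_le (b := 2) (by norm_num) hp' h4
  rw [Real.logb_mul (by positivity) (by positivity),
    Real.logb_self_eq_one (by norm_num)] at h5
  unfold Lam
  linarith

theorem Lam_unbounded (r : ℝ) : ∃ B, ∀ N, B ≤ N → r ≤ Lam N := by
  obtain ⟨m, hm⟩ := exists_nat_ge r
  obtain ⟨B, hB⟩ := U_unbounded (2 ^ m)
  refine ⟨B, fun N hN => ?_⟩
  have h4 : (2 : ℝ) ^ m ≤ U N := by exact_mod_cast hB N hN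
  have h5 := Real.logb_le_logb_of_le (b := 2) (by norm_num) (by positivity) h4
  rw [Real.logb_pow, Real.logb_self_eq_one (by norm_num)] at h5
  unfold Lam
  linarith

/-- The number of different behaviours of codes of length `L` is exponentially smaller than the
number of codes: `log U (2 ^ L) ≤ ρ L + C` with `ρ < 1`. -/
theorem exists_rate : ∃ ρ : ℝ, 0 < ρ ∧ ρ < 1 ∧ ∃ C : ℝ, ∀ L : ℕ,
    Real.logb 2 (U (2 ^ L)) ≤ ρ * L + C := by
  obtain ⟨B0, hB0⟩ := density
  set B := B0 + 2 with hB
  set G := Real.logb 2 (grow B) with hG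
  have hG2 : 2 ≤ G := by
    have : (2 : ℝ) ^ 2 ≤ grow B := by
      have : 2 ^ 2 ≤ grow B := by unfold grow; omega
      exact_mod_cast this
    have h5 := Real.logb_le_logb_of_le (b := 2) (by norm_num) (by positivity) this
    rw [Real.logb_pow, Real.logb_self_eq_one (by norm_num)] at h5
    norm_num at h5; exact h5
  refine ⟨1 - 1 / G, ?_, ?_, ?_⟩
  · have : 1 / G ≤ 1 / 2 := by gcongr
    linarith
  · have : 0 < 1 / G := by positivity
    linarith
  set ρ := 1 - 1 / G with hρ
  have hρ0 : 0 ≤ ρ := by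
    have : 1 / G ≤ 1 / 2 := by gcongr
    linarith
  have key : ∀ N, B ≤ N → Lam N ≤ ρ * Real.logb 2 N := by
    intro N
    induction N using Nat.strong_induction_on with
    | _ N ih =>
      intro hN
      have hNp : (0 : ℝ) < N := by exact_mod_cast (by omega : 0 < N)
      rcases lt_or_ge N (grow B) with hlt | hge
      · have h1 := hB0 N (by omega)
        have hp : (0 : ℝ) < U N := by exact_mod_cast U_pos (by omega)
        have h5 := Real.logb_le_logb_of_le (b := 2) (by norm_num) hp h1
        rw [Real.logb_mul (by norm_num) (by positivity)] at h5
        have h6 : Real.logb 2 (1 / 128) = -7 := by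
          rw [show (1 / 128 : ℝ) = 2 ^ (-7 : ℝ) by
            rw [Real.rpow_neg (by norm_num)]; norm_num, Real.logb_rpow] <;> norm_num
        have h7 : Real.logb 2 N ≤ G :=
          Real.logb_le_logb_of_le (by norm_num) hNp (by exact_mod_cast hlt.le)
        have h8 : 1 / G * Real.logb 2 N ≤ 1 := by
          rw [one_div, inv_mul_le_iff₀ (by linarith)]; linarith
        unfold Lam
        rw [h6] at h5
        rw [hρ, sub_mul, one_mul]
        linarith
      · set m := root N with hm
        have hN4 : 4 ≤ N := le_trans (by unfold grow; omega) hge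
        have hmB : B ≤ m := le_root hge
        have h1 := ih m (root_lt hN4) hmB
        have h2 := Lam_le_two_mul (by omega) (by omega) (lt_grow_root N).le
        have hmp : (0 : ℝ) < m := by exact_mod_cast (by omega : 0 < m)
        have h3 : (m : ℝ) ^ 2 ≤ N := by
          have := grow_root_le hN4
          rw [← hm] at this; unfold grow at this
          exact_mod_cast (by omega : m ^ 2 ≤ N)
        have h4 := Real.logb_le_logb_of_le (b := 2) (by norm_num) (by positivity) h3
        rw [Real.logb_pow] at h4
        push_cast at h4
        have h5 := mul_le_mul_of_nonneg_left h4 hρ0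
        rw [← hm] at h2
        linarith
  refine ⟨Lam (2 ^ B), fun L => ?_⟩
  have h1 : Lam (2 ^ B) ≥ 6 := Lam_ge Nat.one_le_two_pow
  rcases le_total B L with h | h
  · have h2 := key (2 ^ L) (le_trans h Nat.lt_two_pow_self.le)
    push_cast at h2
    rw [Real.logb_pow, Real.logb_self_eq_one (by norm_num), mul_one] at h2
    unfold Lam at h2 h1 ⊢
    linarith
  · have h2 := Lam_mono Nat.one_le_two_pow (Nat.pow_le_pow_right (by norm_num : 0 < 2) h)
    have : 0 ≤ ρ * (L : ℝ) := by positivity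
    unfold Lam at *
    linarith

/-! ### Values at a point -/

/-- The positive values at `a` of the codes below `N`. -/
noncomputable def vals (a N : ℕ) : Finset ℕ :=
  ((below N).biUnion fun e => (ev e a).toFinset).filter (1 ≤ ·)

theorem mem_vals {a N v : ℕ} : v ∈ vals a N ↔ 1 ≤ v ∧ ∃ e ∈ below N, ev e a = some v := by
  simp [vals, and_comm]

theorem vals_mono (a : ℕ) {M N : ℕ} (h : M ≤ N) : vals a M ⊆ vals a N := by
  intro v hv
  obtain ⟨h1, e, he, h2⟩ := mem_vals.1 hv
  exact mem_vals.2 ⟨h1, e, below_mono h he, h2⟩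

theorem card_vals_pos (a : ℕ) {N : ℕ} (h : 2 ≤ N) : 0 < (vals a N).card := by
  refine Finset.card_pos.2 ⟨a + 1, mem_vals.2 ⟨by omega, Code.succ, mem_below.2 ?_, ?_⟩⟩
  · simp [Code.encodeCode_eq, Code.encodeCode]; omega
  · exact ev_eq_some.2 (by simp [Code.eval])

theorem sq_card_vals_le (a N : ℕ) : (vals a N).card ^ 2 ≤ (vals a (grow N)).card := by
  rw [pow_two, ← Finset.card_product]
  refine Finset.card_le_card_of_injOn (fun p => Nat.pair p.1 p.2) ?_ ?_
  · rintro ⟨u, v⟩ h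
    simp only [Finset.coe_product, Set.mem_prod, Finset.mem_coe, mem_vals] at h
    obtain ⟨⟨hu, e, he, h1⟩, hv, f, hf, h2⟩ := h
    refine mem_vals.2 ⟨hu.trans (Nat.left_le_pair u v), Code.pair e f,
      pair_mem_below.2 ⟨he, hf⟩, ev_pair.2 ⟨u, v, h1, h2, rfl⟩⟩
  · rintro ⟨u, v⟩ _ ⟨u', v'⟩ _ h
    simp only [Nat.pair_eq_pair] at h
    obtain ⟨rfl, rfl⟩ := h
    rfl

/-- The logarithm of the number of values at `a` of the codes below `N`. -/
noncomputable def tau (a N : ℕ) : ℝ := Real.logb 2 (vals a N).card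

theorem tau_nonneg (a N : ℕ) : 0 ≤ tau a N := by
  unfold tau
  rcases Nat.eq_zero_or_pos (vals a N).card with h | h
  · simp [h]
  · exact Real.logb_nonneg (by norm_num) (by exact_mod_cast h)

theorem two_mul_tau_le (a : ℕ) {N M : ℕ} (h : 2 ≤ N) (hM : grow N ≤ M) :
    2 * tau a N ≤ tau a M := by
  have hp : (0 : ℝ) < (vals a N).card := by exact_mod_cast card_vals_pos a h
  have h1 : ((vals a N).card : ℝ) ^ 2 ≤ (vals a M).card := by
    exact_mod_cast (sq_card_vals_le a N).trans (Finset.card_le_card (vals_mono a hM))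
  have h5 := Real.logb_le_logb_of_le (b := 2) (by norm_num) (by positivity) h1
  rw [Real.logb_pow] at h5
  exact_mod_cast h5

/-! ### Codes that hold data -/

theorem prim_left {α : Type} [Primcodable α] {f : α → ℕ} (hf : Primrec f) :
    Primrec fun x => (f x).unpair.1 :=
  Primrec.fst.comp (Primrec.unpair.comp hf)

theorem prim_right {α : Type} [Primcodable α] {f : α → ℕ} (hf : Primrec f) :
    Primrec fun x => (f x).unpair.2 :=
  Primrec.snd.comp (Primrec.unpair.comp hf)

theorem prim_pair {α : Type} [Primcodable α] {f g : α → ℕ} (hf : Primrec f) (hg : Primrec g) :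
    Primrec fun x => Nat.pair (f x) (g x) :=
  Primrec₂.natPair.comp hf hg

theorem prim_succ {α : Type} [Primcodable α] {f : α → ℕ} (hf : Primrec f) :
    Primrec fun x => f x + 1 :=
  Primrec.succ.comp hf

theorem exists_code_of_primrec {f : ℕ → ℕ} (hf : Primrec f) :
    ∃ c : Code, ∀ n, c.eval n = Part.some (f n) := by
  obtain ⟨c, hc⟩ := Code.exists_code.1 (Nat.Partrec.of_primrec (Primrec.nat_iff.1 hf))
  exact ⟨c, fun n => by rw [hc]; rfl⟩

theorem eval_comp_of_eq {c r : Code} {n m : ℕ} (h : r.eval n = Part.some m) :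
    (Code.comp c r).eval n = c.eval m := by
  have : (Code.comp c r).eval n = (r.eval n).bind c.eval := rfl
  rw [this, h]
  exact Part.bind_some _ _

theorem eval_eq_of_ev {c : Code} {n m : ℕ} (h : ev c n = some m) : c.eval n = Part.some m :=
  Part.eq_some_iff.2 (ev_eq_some.1 h)

theorem ev_of_eval {c : Code} {n m : ℕ} (h : c.eval n = Part.some m) : ev c n = some m :=
  ev_eq_some.2 (by rw [h]; exact Part.mem_some m)

/-- The data that a code below `ν j` can carry while still computing a prescribed function of
input and data, along the size bounds `ν` and for inputs with first component `a`. -/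
noncomputable def holds (ν : ℕ → ℕ) (a : ℕ) : ℕ → Finset ℕ
  | 0 => {0}
  | 1 => {0}
  | j + 2 => ((holds ν a (j + 1)) ×ˢ (vals a (ν j) ×ˢ holds ν a j)).image
      fun p => Nat.pair p.1 (Nat.pair p.2.1 p.2.2)

theorem card_holds (ν : ℕ → ℕ) (a j : ℕ) : (holds ν a (j + 2)).card =
    (holds ν a (j + 1)).card * ((vals a (ν j)).card * (holds ν a j).card) := by
  rw [holds, Finset.card_image_of_injective, Finset.card_product, Finset.card_product]
  rintro ⟨u, v, w⟩ ⟨u', v', w'⟩ h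
  simp only [Nat.pair_eq_pair] at h
  obtain ⟨rfl, rfl, rfl⟩ := h
  rfl

/-- The rearrangement `(a, ((M, (y, z₂)), z₁)) ↦ (a, (M, (z₁, (y, z₂))))`. -/
def rearrange (x : ℕ) : ℕ :=
  Nat.pair x.unpair.1 (Nat.pair x.unpair.2.unpair.1.unpair.1
    (Nat.pair x.unpair.2.unpair.2 x.unpair.2.unpair.1.unpair.2))

/-- One step of the recursion that copies the value `y` of the base case and the data `z₂` of the
step into the state: `(a, ((i, s), z₂)) ↦ (a, (i + 1, (y, z₂)))`. -/
def carryStep (x : ℕ) : ℕ :=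
  Nat.pair x.unpair.1 (Nat.pair (x.unpair.2.unpair.1.unpair.1 + 1)
    (Nat.pair (if x.unpair.2.unpair.1.unpair.1 = 0 then x.unpair.2.unpair.1.unpair.2
      else x.unpair.2.unpair.1.unpair.2.unpair.2.unpair.2.unpair.1) x.unpair.2.unpair.2))

theorem primrec_rearrange : Primrec rearrange :=
  have hi : Primrec fun x : ℕ => x := Primrec.id
  have h2 := prim_right hi
  prim_pair (prim_left hi) (prim_pair (prim_left (prim_left h2))
    (prim_pair (prim_right h2) (prim_right (prim_left h2))))

theorem primrec_carryStep : Primrec carryStep :=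
  have hi : Primrec fun x : ℕ => x := Primrec.id
  have h2 := prim_right hi
  have h3 := prim_left h2
  prim_pair (prim_left hi) (prim_pair (prim_succ (prim_left h3)) (prim_pair (Primrec.ite
    (Primrec.eq.comp (prim_left h3) (Primrec.const 0)) (prim_right h3)
      (prim_left (prim_right (prim_right (prim_right h3))))) (prim_right h2)))

/-- Every element of `holds ν a j` can be carried by a code below `ν j` that computes a given
partial recursive function of the input and the carried datum, for inputs `(a, M)`, `1 ≤ M`. -/
theorem exists_holder (j : ℕ) : ∀ c : Code, ∃ B : ℕ, ∀ ν : ℕ → ℕ, B ≤ ν 0 →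
    (∀ i, grow (ν i) ≤ ν (i + 1)) → ∀ a, ∀ z ∈ holds ν a j, ∃ e ∈ below (ν j), ∀ M, 1 ≤ M →
      e.eval (Nat.pair a M) = c.eval (Nat.pair a (Nat.pair M z)) := by
  have base : ∀ c : Code, ∃ e : Code, ∀ a M,
      e.eval (Nat.pair a M) = c.eval (Nat.pair a (Nat.pair M 0)) := by
    intro c
    obtain ⟨r, hr⟩ := exists_code_of_primrec (f := fun x => Nat.pair x.unpair.1
      (Nat.pair x.unpair.2 0)) (prim_pair (prim_left Primrec.id)
        (prim_pair (prim_right Primrec.id) (Primrec.const 0)))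
    exact ⟨Code.comp c r, fun a M => eval_comp_of_eq (by rw [hr]; simp)⟩
  induction j using Nat.twoStepInduction with
  | zero =>
    intro c
    obtain ⟨e, he⟩ := base c
    refine ⟨Encodable.encode e + 1, fun ν hν _ a z hz => ⟨e, mem_below.2 (by omega), ?_⟩⟩
    rw [holds, Finset.mem_singleton] at hz
    subst hz
    exact fun M _ => he a M
  | one =>
    intro c
    obtain ⟨e, he⟩ := base c
    refine ⟨Encodable.encode e + 1, fun ν hν hg a z hz => ⟨e, mem_below.2 ?_, ?_⟩⟩
    · have := hg 0
      have := lt_grow (ν 0)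
      simp only [zero_add] at *
      omega
    · rw [holds, Finset.mem_singleton] at hz
      subst hz
      exact fun M _ => he a M
  | more j ih0 ih1 =>
    intro c
    obtain ⟨r1, hr1⟩ := exists_code_of_primrec primrec_rearrange
    obtain ⟨r2, hr2⟩ := exists_code_of_primrec primrec_carryStep
    obtain ⟨B1, hB1⟩ := ih1 (Code.comp c r1)
    obtain ⟨B2, hB2⟩ := ih0 r2
    refine ⟨max B1 B2, fun ν hν hg a z hz => ?_⟩
    simp only [holds, Finset.mem_image, Finset.mem_product, Prod.exists] at hz
    obtain ⟨z1, y, z2, ⟨hz1, hy, hz2⟩, rfl⟩ := hz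
    obtain ⟨hy1, Y, hY, hYy⟩ := mem_vals.1 hy
    obtain ⟨e1, he1, h1⟩ := hB1 ν (le_of_max_le_left hν) hg a z1 hz1
    obtain ⟨e2, he2, h2⟩ := hB2 ν (le_of_max_le_right hν) hg a z2 hz2
    refine ⟨Code.comp e1 (Code.prec Y e2), below_mono (hg (j + 1)) (comp_mem_below.2
      ⟨he1, below_mono (hg j) (prec_mem_below.2 ⟨hY, he2⟩)⟩), ?_⟩
    have hcarry : ∀ i, ev (Code.prec Y e2) (Nat.pair a (i + 1)) =
        some (Nat.pair a (Nat.pair (i + 1) (Nat.pair y z2))) := by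
      intro i
      induction i with
      | zero =>
        refine ev_prec_succ.2 ⟨y, ev_prec_zero.2 hYy, ev_of_eval ?_⟩
        rw [h2 _ (hy1.trans (Nat.right_le_pair 0 y)), hr2]
        simp [carryStep]
      | succ i ih =>
        refine ev_prec_succ.2 ⟨_, ih, ev_of_eval ?_⟩
        rw [h2 _ (le_trans (by omega) (Nat.left_le_pair (i + 1) _)), hr2]
        simp [carryStep]
    intro M hM
    obtain ⟨i, rfl⟩ : ∃ i, M = i + 1 := ⟨M - 1, by omega⟩
    rw [eval_comp_of_eq (eval_eq_of_ev (hcarry i)),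
      h1 _ (le_trans (by omega) (Nat.left_le_pair (i + 1) _)), eval_comp_of_eq (hr1 _)]
    simp [rearrange]

/-! ### Constant-like levels and branching levels -/

/-- A level is flat if, up to a factor `2`, its capacity is attained by a single question. -/
def Flat (N : ℕ) : Prop := ∃ q, U N ≤ 2 * ((vals q N).card + 1)

/-- Add to every output the first question whose answer differs from `y` (plus one), or `0` if
all answers are `y`. -/
def mark (y : ℕ) : QTree ℕ → QTree ℕ
  | .leaf o => leaf (Nat.pair o 0)
  | .ask r k => ask r fun y' =>
      if y' = y then mark y (k y') else (k y').seq fun o => leaf (Nat.pair o (r + 1))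

/-- The output of `mark y t` when all answers are `y`. -/
def markConst (y : ℕ) : QTree ℕ → ℕ
  | .leaf o => Nat.pair o 0
  | .ask _ k => markConst y (k y)

theorem exists_run_mark {f : ℕ → Option ℕ} (y : ℕ) {t : QTree ℕ} {o : ℕ}
    (h : t.run f = some o) : ∃ r, (mark y t).run f = some (Nat.pair o r) := by
  induction t with
  | leaf o' =>
    simp only [run, Option.some.injEq] at h
    exact ⟨0, by simp [mark, run, h]⟩
  | ask r k ih =>
    simp only [run, Option.bind_eq_some_iff] at h
    obtain ⟨y', hy', h⟩ := h
    by_cases hyy : y' = y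
    · obtain ⟨r', hr'⟩ := ih y' h
      exact ⟨r', by simp only [mark, run, hy', Option.bind_some, if_pos hyy]; exact hr'⟩
    · exact ⟨r + 1, by simp [mark, run, hy', if_neg hyy, run_seq, h]⟩

theorem run_mark {f : ℕ → Option ℕ} (y : ℕ) {t : QTree ℕ} {v : ℕ}
    (h : (mark y t).run f = some v) : v = markConst y t ∨
      v.unpair.2 ≠ 0 ∧ ∃ y', y' ≠ y ∧ f (v.unpair.2 - 1) = some y' := by
  induction t with
  | leaf o' => exact Or.inl (by simpa [mark, run, markConst, eq_comm] using h)
  | ask r k ih =>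
    simp only [mark, run, Option.bind_eq_some_iff] at h
    obtain ⟨y', hy', h⟩ := h
    by_cases hyy : y' = y
    · rw [if_pos hyy] at h
      subst hyy
      exact ih y' h
    · rw [if_neg hyy, run_seq, Option.bind_eq_some_iff] at h
      obtain ⟨o, _, h⟩ := h
      simp only [run, Option.some.injEq] at h
      subst h
      right
      have hex := hy'
      simpa using ⟨_, hyy, hex⟩

/-- At a level that is not flat, half of the capacity is attained by codes that give two
different answers at two questions which can be read off the output. -/
theorem exists_branching {N : ℕ} (h : ¬ Flat N) : ∃ (t : QTree ℕ) (q : ℕ) (O : Finset ℕ),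
    U N ≤ 2 * O.card ∧ ∀ o ∈ O, ∃ X ∈ below N, t.run (ev X) = some o ∧
      ∃ y y', y ≠ y' ∧ ev X q = some y ∧ ev X (o.unpair.2 - 1) = some y' := by
  obtain ⟨t, ht⟩ := exists_cap ev (below N)
  cases t with
  | leaf o =>
    refine (h ⟨0, ?_⟩).elim
    have : (outs ev (below N) (leaf o)).card ≤ 1 := by
      refine Finset.card_le_one.2 fun a ha b hb => ?_
      obtain ⟨_, _, h1⟩ := mem_outs.1 ha
      obtain ⟨_, _, h2⟩ := mem_outs.1 hb
      exact Option.some.inj (h1.symm.trans h2)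
    unfold U
    omega
  | ask q k =>
    set t' : QTree ℕ := ask q fun y => mark y (k y) with ht'
    set O' := outs ev (below N) t' with hO'
    have h1 : U N ≤ O'.card := by
      unfold U
      rw [← ht]
      refine Finset.card_le_card_of_surjOn (fun v => v.unpair.1) ?_
      intro o ho
      obtain ⟨X, hX, hr⟩ := mem_outs.1 ho
      simp only [run, Option.bind_eq_some_iff] at hr
      obtain ⟨y, hy, hr⟩ := hr
      obtain ⟨r, hr⟩ := exists_run_mark y hr
      refine ⟨Nat.pair o r, mem_outs.2 ⟨X, hX, ?_⟩, by simp⟩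
      simp [ht', run, hy, hr]
    set Z := (insert 0 (vals q N)).image fun y => markConst y (k y) with hZ
    have h2 : Z.card ≤ (vals q N).card + 1 :=
      Finset.card_image_le.trans (Finset.card_insert_le _ _)
    have h3 : O'.card ≤ (O' \ Z).card + Z.card := by
      have := Finset.le_card_sdiff Z O'
      omega
    have h4 : ¬ U N ≤ 2 * ((vals q N).card + 1) := fun hc => h ⟨q, hc⟩
    refine ⟨t', q, O' \ Z, by omega, fun o ho => ?_⟩
    obtain ⟨ho, hoZ⟩ := Finset.mem_sdiff.1 ho
    obtain ⟨X, hX, hr⟩ := mem_outs.1 ho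
    refine ⟨X, hX, hr, ?_⟩
    simp only [ht', run, Option.bind_eq_some_iff] at hr
    obtain ⟨y, hy, hr⟩ := hr
    rcases run_mark y hr with h5 | ⟨-, y', h5, h6⟩
    · refine (hoZ (Finset.mem_image.2 ⟨y, ?_, h5.symm⟩)).elim
      rcases Nat.eq_zero_or_pos y with rfl | hpos
      · exact Finset.mem_insert_self _ _
      · exact Finset.mem_insert_of_mem (mem_vals.2 ⟨hpos, X, hX, hy⟩)
    · exact ⟨y, y', h5.symm, hy, h6⟩

/-! ### Transcripts -/

/-- The subtree reached after the first question is answered by `f`. -/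
def next (f : ℕ → Option ℕ) : QTree ℕ → QTree ℕ
  | .leaf o => leaf o
  | .ask q k => k ((f q).getD 0)

/-- The subtree reached after the answers in a list, the latest answer first. -/
def walk (t : QTree ℕ) : List ℕ → QTree ℕ
  | [] => t
  | v :: l => match walk t l with
    | .leaf o => leaf o
    | .ask _ k => k v

/-- The list of the first `i` answers of `f` along `t`, the latest answer first. -/
def transcript (f : ℕ → Option ℕ) (t : QTree ℕ) : ℕ → List ℕ
  | 0 => []
  | i + 1 => match walk t (transcript f t i) with
    | .leaf _ => transcript f t i
    | .ask q _ => (f q).getD 0 :: transcript f t i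

theorem walk_transcript (f : ℕ → Option ℕ) (t : QTree ℕ) (i : ℕ) :
    walk t (transcript f t i) = (next f)^[i] t := by
  induction i with
  | zero => rfl
  | succ i ih =>
    rw [Function.iterate_succ_apply', ← ih, transcript]
    cases h : walk t (transcript f t i) with
    | leaf o => simp [h, next]
    | ask q k => simp [walk, h, next]

theorem run_next {f : ℕ → Option ℕ} {t : QTree ℕ} {o : ℕ} (h : t.run f = some o) (i : ℕ) :
    ((next f)^[i] t).run f = some o := by
  induction i with
  | zero => exact h
  | succ i ih =>
    rw [Function.iterate_succ_apply']
    cases h' : (next f)^[i] t with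
    | leaf o' => rw [h'] at ih; exact ih
    | ask q k =>
      rw [h'] at ih
      simp only [run, Option.bind_eq_some_iff] at ih
      obtain ⟨y, hy, ih⟩ := ih
      simpa [next, hy] using ih

theorem exists_next_eq_leaf {f : ℕ → Option ℕ} {t : QTree ℕ} {o : ℕ} (h : t.run f = some o) :
    ∃ b, ∀ i, b ≤ i → (next f)^[i] t = leaf o := by
  have key : ∃ b, (next f)^[b] t = leaf o := by
    induction t with
    | leaf o' => exact ⟨0, by simpa [run] using h⟩
    | ask q k ih =>
      simp only [run, Option.bind_eq_some_iff] at h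
      obtain ⟨y, hy, h⟩ := h
      obtain ⟨b, hb⟩ := ih y h
      exact ⟨b + 1, by simpa [next, hy] using hb⟩
  obtain ⟨b, hb⟩ := key
  refine ⟨b, fun i hi => ?_⟩
  induction i, hi using Nat.le_induction with
  | base => exact hb
  | succ i _ ih => rw [Function.iterate_succ_apply', ih]; rfl

/-- What is used of a level that is not flat. The table `g` maps the number of a transcript to
`(0, (r, r))` if the next question is `r`, and to `(1, (r₁, r₂))` once the transcript is complete;
then `r₁` and `r₂` have different answers. The codes `X o`, `o ∈ O`, have complete transcripts after
`b` steps, all numbers of transcripts are below `D`, and `M o i` is the transcript of `X o` after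
`i` steps. -/
def Branching (N : ℕ) (g : ℕ → ℕ) (b D : ℕ) (O : Finset ℕ) (X : ℕ → Code) (M : ℕ → ℕ → ℕ) :
    Prop :=
  U N ≤ 2 * O.card ∧ ∀ o ∈ O, X o ∈ below N ∧ M o 0 = 0 ∧ (∀ i, M o i < D) ∧
    (∀ i, (g (M o i)).unpair.1 = 0 →
      (g (M o i)).unpair.2.unpair.2 = (g (M o i)).unpair.2.unpair.1 ∧
      ∃ v, ev (X o) (g (M o i)).unpair.2.unpair.1 = some v ∧
        M o (i + 1) = Nat.pair v (M o i) + 1) ∧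
    (∀ i, (g (M o i)).unpair.1 ≠ 0 → M o (i + 1) = M o i ∧ ∃ y y', y ≠ y' ∧
      ev (X o) (g (M o i)).unpair.2.unpair.1 = some y ∧
      ev (X o) (g (M o i)).unpair.2.unpair.2 = some y') ∧
    (∀ i, b ≤ i → (g (M o i)).unpair.1 ≠ 0) ∧
    ∀ oo ∈ O, ∀ i, b ≤ i → M o i = M oo i → o = oo

/-- The table entry of a subtree: `q` is the first of the two questions asked at the end. -/
def entry (q : ℕ) : QTree ℕ → ℕ
  | .leaf o => Nat.pair 1 (Nat.pair q (o.unpair.2 - 1))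
  | .ask r _ => Nat.pair 0 (Nat.pair r r)

theorem exists_Branching {N : ℕ} (h : ¬ Flat N) : ∃ g b D O X M, Branching N g b D O X M := by
  obtain ⟨t, q, O, hU, hO⟩ := exists_branching h
  choose! X hX hrun hy using hO
  have hb : ∀ o, ∃ b, o ∈ O → ∀ i, b ≤ i → (next (ev (X o)))^[i] t = leaf o := by
    intro o
    by_cases ho : o ∈ O
    · obtain ⟨b, hb⟩ := exists_next_eq_leaf (hrun o ho)
      exact ⟨b, fun _ => hb⟩
    · exact ⟨0, fun h => (ho h).elim⟩
  choose b hb using hb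
  have hb' : ∀ o ∈ O, ∀ i, O.sup b ≤ i → (next (ev (X o)))^[i] t = leaf o := fun o ho i hi =>
    hb o ho i ((Finset.le_sup ho).trans hi)
  set g : ℕ → ℕ := fun μ => entry q (walk t (Denumerable.ofNat (List ℕ) μ)) with hg
  set M : ℕ → ℕ → ℕ := fun o i => Encodable.encode (transcript (ev (X o)) t i) with hM
  have hgM : ∀ o i, g (M o i) = entry q ((next (ev (X o)))^[i] t) := by
    intro o i
    simp only [hg, hM, Denumerable.ofNat_encode, walk_transcript]
  have hMs : ∀ o i, M o (i + 1) = match (next (ev (X o)))^[i] t with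
      | .leaf _ => M o i
      | .ask r _ => Nat.pair ((ev (X o) r).getD 0) (M o i) + 1 := by
    intro o i
    rw [← walk_transcript]
    simp only [hM, transcript]
    cases walk t (transcript (ev (X o)) t i) with
    | leaf _ => rfl
    | ask r k => simp
  have hconst : ∀ o ∈ O, ∀ i, O.sup b ≤ i → M o i = M o (O.sup b) := by
    intro o ho i hi
    induction i, hi using Nat.le_induction with
    | base => rfl
    | succ i hi ih => rw [hMs, hb' o ho i hi, ← ih]
  refine ⟨g, O.sup b, O.sup (fun o => (Finset.range (O.sup b + 1)).sup (M o)) + 1, O, X, M, hU,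
    fun o ho => ⟨hX o ho, rfl, ?_, ?_, ?_, ?_, ?_⟩⟩
  · intro i
    refine Nat.lt_succ_of_le (le_trans ?_
      (Finset.le_sup (f := fun o => (Finset.range (O.sup b + 1)).sup (M o)) ho))
    rcases le_total (O.sup b) i with hi | hi
    · rw [hconst o ho i hi]
      exact Finset.le_sup (f := M o) (by simp)
    · exact Finset.le_sup (f := M o) (by simp; omega)
  · intro i h0
    rw [hgM] at h0 ⊢
    rw [hMs]
    have hr := run_next (hrun o ho) i
    cases h' : (next (ev (X o)))^[i] t with
    | leaf o' => simp [h', entry] at h0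
    | ask r k =>
      rw [h'] at hr
      simp only [run, Option.bind_eq_some_iff] at hr
      obtain ⟨y, hy, -⟩ := hr
      exact ⟨by simp [entry], y, by simpa [entry] using hy, by simp [hy]⟩
  · intro i h0
    rw [hgM] at h0 ⊢
    rw [hMs]
    have hr := run_next (hrun o ho) i
    cases h' : (next (ev (X o)))^[i] t with
    | leaf o' =>
      rw [h'] at hr
      simp only [run, Option.some.injEq] at hr
      subst hr
      exact ⟨rfl, by simpa [entry] using hy o' ho⟩
    | ask r k => simp [h', entry] at h0
  · intro i hi
    rw [hgM, hb' o ho i hi]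
    simp [entry]
  · intro o' ho' i hi h'
    have h1 : transcript (ev (X o)) t i = transcript (ev (X o')) t i :=
      Encodable.encode_injective h'
    have h2 := walk_transcript (ev (X o)) t i
    rw [h1, walk_transcript, hb' o' ho' i hi, hb' o ho i hi] at h2
    simpa using h2.symm

/-! ### One stage of the amplification -/

/-- The entry at `k` of the list with number `c`. -/
def glook (c k : ℕ) : ℕ := (Denumerable.ofNat (List ℕ) c).getD k 0

theorem exists_glook (g : ℕ → ℕ) (D : ℕ) : ∃ c, ∀ k, k < D → glook c k = g k := by
  refine ⟨Encodable.encode ((List.range D).map g), fun k hk => ?_⟩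
  rw [glook, Denumerable.ofNat_encode]
  simp [List.getD, hk]

theorem prim_glook {α : Type} [Primcodable α] {f g : α → ℕ} (hf : Primrec f) (hg : Primrec g) :
    Primrec fun x => glook (f x) (g x) :=
  (Primrec.list_getD 0).comp ((Primrec.ofNat (List ℕ)).comp hf) hg

/-- The table entry for level `j` and transcript `μ`, the tables being coded into the parameter
`a = (y, (c, (b, n)))`. -/
def tab (j a μ : ℕ) : ℕ := glook a.unpair.2.unpair.1 (Nat.pair j μ)

/-- The transcript at time `i`, recovered from the state `s = ((_, μ), v)`, where `μ` is the
previous transcript and `v` the latest answer. -/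
def sig (j a i s : ℕ) : ℕ :=
  if i = 0 then 0 else
    if (tab j a s.unpair.1.unpair.2).unpair.1 = 0 then
      Nat.pair s.unpair.2 s.unpair.1.unpair.2 + 1
    else s.unpair.1.unpair.2

/-- `(a, ((i, s), z)) ↦ ((s, z), μ)` with the transcript `μ` at time `i`. -/
def stepW (j x : ℕ) : ℕ :=
  Nat.pair (Nat.pair x.unpair.2.unpair.1.unpair.2 x.unpair.2.unpair.2)
    (sig j x.unpair.1 x.unpair.2.unpair.1.unpair.1 x.unpair.2.unpair.1.unpair.2)

/-- `(a, ((i, s), z))` is mapped to the question asked at time `i`. Once the transcript is complete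
it is the first question up to time `z + b` and the second one later, so that the time at which
the answer changes carries the datum `z`. -/
def stepD (j x : ℕ) : ℕ :=
  if x.unpair.2.unpair.1.unpair.1 < x.unpair.2.unpair.2 + x.unpair.1.unpair.2.unpair.2.unpair.1
  then (tab j x.unpair.1 (sig j x.unpair.1 x.unpair.2.unpair.1.unpair.1
    x.unpair.2.unpair.1.unpair.2)).unpair.2.unpair.1
  else (tab j x.unpair.1 (sig j x.unpair.1 x.unpair.2.unpair.1.unpair.1
    x.unpair.2.unpair.1.unpair.2)).unpair.2.unpair.2

theorem prim_tab (j : ℕ) {α : Type} [Primcodable α] {f g : α → ℕ} (hf : Primrec f)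
    (hg : Primrec g) : Primrec fun x => tab j (f x) (g x) :=
  prim_glook (prim_left (prim_right hf)) (prim_pair (Primrec.const j) hg)

theorem prim_sig (j : ℕ) {α : Type} [Primcodable α] {f g h : α → ℕ} (hf : Primrec f)
    (hg : Primrec g) (hh : Primrec h) : Primrec fun x => sig j (f x) (g x) (h x) :=
  have h1 := prim_right (prim_left hh)
  Primrec.ite (Primrec.eq.comp hg (Primrec.const 0)) (Primrec.const 0)
    (Primrec.ite (Primrec.eq.comp (prim_left (prim_tab j hf h1)) (Primrec.const 0))
      (prim_succ (prim_pair (prim_right hh) h1)) h1)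

theorem primrec_stepW (j : ℕ) : Primrec (stepW j) :=
  have hi : Primrec fun x : ℕ => x := Primrec.id
  have h2 := prim_right hi
  have h3 := prim_left h2
  prim_pair (prim_pair (prim_right h3) (prim_right h2))
    (prim_sig j (prim_left hi) (prim_left h3) (prim_right h3))

theorem primrec_stepD (j : ℕ) : Primrec (stepD j) :=
  have hi : Primrec fun x : ℕ => x := Primrec.id
  have h2 := prim_right hi
  have h3 := prim_left h2
  have ht := prim_right (prim_tab j (prim_left hi)
    (prim_sig j (prim_left hi) (prim_left h3) (prim_right h3)))
  Primrec.ite (Primrec.nat_lt.comp (prim_left h3) (Primrec.nat_add.comp (prim_right h2)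
    (prim_left (prim_right (prim_right (prim_left hi)))))) (prim_left ht) (prim_right ht)

/-- The answer at time `i`: the first question of the table entry is asked before time `e`, the
second one from then on. -/
noncomputable def answer (g : ℕ → ℕ) (X : Code) (μ : ℕ → ℕ) (e i : ℕ) : ℕ :=
  (ev X (if i < e then (g (μ i)).unpair.2.unpair.1 else (g (μ i)).unpair.2.unpair.2)).getD 0

/-- The states of the recursion. -/
noncomputable def state (g : ℕ → ℕ) (X : Code) (μ : ℕ → ℕ) (p zW e : ℕ) : ℕ → ℕ
  | 0 => p
  | i + 1 => Nat.pair (Nat.pair (Nat.pair (state g X μ p zW e i) zW) (μ i)) (answer g X μ e i)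

theorem state_pos {g : ℕ → ℕ} {X : Code} {μ : ℕ → ℕ} {p zW e : ℕ} (hp : 1 ≤ p) (i : ℕ) :
    1 ≤ state g X μ p zW e i := by
  induction i with
  | zero => exact hp
  | succ i ih =>
    exact ih.trans ((Nat.left_le_pair _ _).trans ((Nat.left_le_pair _ _).trans
      (Nat.left_le_pair _ _)))

theorem state_inj {g : ℕ → ℕ} {X X' : Code} {μ μ' : ℕ → ℕ} {p p' zW zW' e e' : ℕ} {m : ℕ}
    (h : state g X μ p zW e m = state g X' μ' p' zW' e' m) :
    p = p' ∧ ∀ i, i < m → zW = zW' ∧ μ i = μ' i ∧ answer g X μ e i = answer g X' μ' e' i := by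
  induction m with
  | zero => exact ⟨h, fun i hi => by omega⟩
  | succ m ih =>
    simp only [state, Nat.pair_eq_pair] at h
    obtain ⟨⟨⟨h1, h2⟩, h3⟩, h4⟩ := h
    obtain ⟨h5, h6⟩ := ih h1
    refine ⟨h5, fun i hi => ?_⟩
    rcases Nat.lt_succ_iff_lt_or_eq.1 hi with hi | rfl
    · exact h6 i hi
    · exact ⟨h2, h3, h4⟩

theorem Branching.answer_spec {N : ℕ} {g : ℕ → ℕ} {b D : ℕ} {O : Finset ℕ} {X : ℕ → Code}
    {M : ℕ → ℕ → ℕ} (h : Branching N g b D O X M) {o : ℕ} (ho : o ∈ O) (e i : ℕ) :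
    ev (X o) (if i < e then (g (M o i)).unpair.2.unpair.1 else (g (M o i)).unpair.2.unpair.2) =
      some (answer g (X o) (M o) e i) ∧
    ((g (M o i)).unpair.1 = 0 → M o (i + 1) = Nat.pair (answer g (X o) (M o) e i) (M o i) + 1) := by
  obtain ⟨-, -, -, h0, h1, -⟩ := h.2 o ho
  by_cases hz : (g (M o i)).unpair.1 = 0
  · obtain ⟨h3, v, h4, h5⟩ := h0 i hz
    have : ev (X o) (if i < e then (g (M o i)).unpair.2.unpair.1
        else (g (M o i)).unpair.2.unpair.2) = some v := by rw [h3, ite_self, h4]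
    simp only [answer, this, Option.getD_some, true_and]
    exact fun _ => h5
  · obtain ⟨-, y, y', -, h4, h5⟩ := h1 i hz
    refine ⟨?_, fun h => (hz h).elim⟩
    unfold answer
    split_ifs <;> simp [*]

/-- At a level that is not flat, a primitive recursion carries the datum `p` of its base case, the
data `zW` and `zD` of two holders and the choice of a code `X o` into its result. -/
theorem stage_level (j : ℕ) : ∃ B, ∀ ν : ℕ → ℕ, B ≤ ν 0 → (∀ i, grow (ν i) ≤ ν (i + 1)) →
    ∀ g b D O X M, Branching (ν j) g b D O X M → ∀ y c b' n0, b ≤ b' →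
    (∀ μ, μ < D → glook c (Nat.pair j μ) = g μ) →
    ∀ a, a = Nat.pair y (Nat.pair c (Nat.pair b' n0)) → ∃ m0, ∀ m, m0 ≤ m →
    (vals a (ν (j + 2))).card * ((holds ν a (j + 1)).card * ((holds ν a j).card * O.card)) ≤
      (vals (Nat.pair a m) (ν (j + 3))).card := by
  obtain ⟨cW, hcW⟩ := exists_code_of_primrec (primrec_stepW j)
  obtain ⟨cD, hcD⟩ := exists_code_of_primrec (primrec_stepD j)
  obtain ⟨BW, hBW⟩ := exists_holder (j + 1) cW
  obtain ⟨BD, hBD⟩ := exists_holder j cD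
  refine ⟨max BW BD, fun ν hν hg g b D O X M hBr y c b' n0 hb hc a ha =>
    ⟨(holds ν a j).sup id + b' + 1, fun m hm => ?_⟩⟩
  have htab : ∀ o ∈ O, ∀ i, tab j a (M o i) = g (M o i) := by
    intro o ho i
    rw [← hc _ ((hBr.2 o ho).2.2.1 i), tab, ha]
    simp
  have hab : a.unpair.2.unpair.2.unpair.1 = b' := by simp [ha]
  rw [← Finset.card_product, ← Finset.card_product, ← Finset.card_product]
  refine Finset.card_le_card_of_injOn (fun r => state g (X r.2.2.2) (M r.2.2.2) r.1 r.2.1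
    (r.2.2.1 + b') m) ?_ ?_
  · rintro ⟨p, zW, zD, o⟩ hr
    simp only [Finset.coe_product, Set.mem_prod, Finset.mem_coe] at hr
    obtain ⟨hp, hzW, hzD, ho⟩ := hr
    obtain ⟨hp1, P, hP, hPp⟩ := mem_vals.1 hp
    obtain ⟨W, hW, hWe⟩ := hBW ν (le_of_max_le_left hν) hg a zW hzW
    obtain ⟨Dc, hD, hDe⟩ := hBD ν (le_of_max_le_right hν) hg a zD hzD
    refine mem_vals.2 ⟨state_pos hp1 m, Code.prec P (Code.pair W (Code.comp (X o) Dc)),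
      below_mono (hg (j + 2)) (prec_mem_below.2 ⟨hP, below_mono (hg (j + 1)) (pair_mem_below.2
        ⟨hW, below_mono (hg j) (comp_mem_below.2 ⟨(hBr.2 o ho).1, hD⟩)⟩)⟩), ?_⟩
    have hsig : ∀ i, sig j a i (state g (X o) (M o) p zW (zD + b') i) = M o i := by
      intro i
      cases i with
      | zero => exact (hBr.2 o ho).2.1.symm
      | succ i =>
        have h1 := (hBr.answer_spec ho (zD + b') i).2
        simp only [sig, state, Nat.unpair_pair, htab o ho, Nat.add_eq_zero_iff, one_ne_zero,
          and_false, if_false]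
        split_ifs with h0
        · exact (h1 h0).symm
        · exact ((hBr.2 o ho).2.2.2.2.1 i h0).1.symm
    show ev _ (Nat.pair a m) = some (state g (X o) (M o) p zW (zD + b') m)
    clear hm
    induction m with
    | zero => exact ev_prec_zero.2 hPp
    | succ i ih =>
      refine ev_prec_succ.2 ⟨_, ih, ?_⟩
      have hpos : 1 ≤ Nat.pair i (state g (X o) (M o) p zW (zD + b') i) :=
        (state_pos hp1 i).trans (Nat.right_le_pair _ _)
      refine ev_pair.2 ⟨_, answer g (X o) (M o) (zD + b') i, ev_of_eval ((hWe _ hpos).trans (hcW _)), ev_comp.2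
        ⟨_, ev_of_eval ((hDe _ hpos).trans (hcD _)), ?_⟩, ?_⟩
      · have hD' : stepD j (Nat.pair a (Nat.pair (Nat.pair i
            (state g (X o) (M o) p zW (zD + b') i)) zD)) = if i < zD + b' then
              (g (M o i)).unpair.2.unpair.1 else (g (M o i)).unpair.2.unpair.2 := by
          simp only [stepD, Nat.unpair_pair, hsig, htab o ho, hab]
        rw [hD']
        exact (hBr.answer_spec ho (zD + b') i).1
      · simp only [stepW, Nat.unpair_pair, hsig, state]
  · rintro ⟨p, zW, zD, o⟩ hr ⟨p', zW', zD', o'⟩ hr' h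
    simp only [Finset.coe_product, Set.mem_prod, Finset.mem_coe] at hr hr'
    obtain ⟨-, -, hzD, ho⟩ := hr
    obtain ⟨-, -, hzD', ho'⟩ := hr'
    have hle := Finset.le_sup (f := id) hzD
    have hle' := Finset.le_sup (f := id) hzD'
    simp only [id] at hle hle'
    obtain ⟨rfl, h⟩ := state_inj h
    obtain ⟨rfl, h3, -⟩ := h b' (by omega)
    obtain rfl := (hBr.2 o ho).2.2.2.2.2.2 o' ho' b' hb h3
    -- the answer changes at time `zD + b'`
    have key : ∀ z z', z < z' → z + b' < m →
        answer g (X o) (M o) (z + b') (z + b') ≠ answer g (X o) (M o) (z' + b') (z + b') := by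
      intro z z' hzz hm'
      obtain ⟨-, y, y', hy, h4, h5⟩ := (hBr.2 o ho).2.2.2.2.1 (z + b')
        ((hBr.2 o ho).2.2.2.2.2.1 _ (by omega))
      simp only [answer, lt_self_iff_false, if_false, if_pos (by omega : z + b' < z' + b'), h4, h5,
        Option.getD_some]
      exact hy.symm
    obtain rfl : zD = zD' := by
      rcases lt_trichotomy zD zD' with hlt | heq | hlt
      · exact (key _ _ hlt (by omega) (h _ (by omega)).2.2).elim
      · exact heq
      · exact (key _ _ hlt (by omega) (h _ (by omega)).2.2.symm).elim
    rfl

/-! ### Amplification: the values at one point exhaust the capacity -/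

/-- Size bounds that grow, up to rounding, by one binary constructor in each step. -/
def Good (ν : ℕ → ℕ) : Prop := ∀ i, grow (ν i) ≤ ν (i + 1) ∧ ν (i + 1) ≤ grow (ν i + 1)

theorem exists_Good (J : ℕ) : ∀ B : ℕ, ∃ B', ∀ N, B' ≤ N → ∃ ν, Good ν ∧ ν J = N ∧ B ≤ ν 0 := by
  induction J with
  | zero =>
    refine fun B => ⟨B, fun N hN => ⟨fun i => grow^[i] N, fun i => ?_, rfl, hN⟩⟩
    simp only [Function.iterate_succ_apply']
    exact ⟨le_rfl, grow_mono (Nat.le_succ _)⟩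
  | succ J ih =>
    intro B
    obtain ⟨B', hB'⟩ := ih (max (grow B) 4)
    refine ⟨B', fun N hN => ?_⟩
    obtain ⟨ν, hν, hJ, h0⟩ := hB' N hN
    refine ⟨fun i => Nat.casesOn i (root (ν 0)) ν, ?_, hJ, le_root (le_of_max_le_left h0)⟩
    rintro (_ | i)
    · exact ⟨grow_root_le (le_of_max_le_right h0), (lt_grow_root _).le⟩
    · exact hν i

theorem Good.le {ν : ℕ → ℕ} (h : Good ν) (i : ℕ) : ν 0 ≤ ν i := by
  induction i with
  | zero => exact le_rfl
  | succ i ih => exact ih.trans ((lt_grow _).le.trans (h i).1)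

theorem Good.Lam_le {ν : ℕ → ℕ} (h : Good ν) (h0 : 1 ≤ ν 0) (i : ℕ) :
    Lam (ν (i + 1)) ≤ 2 * Lam (ν i) :=
  Lam_le_two_mul (h0.trans (h.le i)) (h0.trans (h.le (i + 1))) (h i).2

theorem Good.Lam_le_pow {ν : ℕ → ℕ} (h : Good ν) (h0 : 1 ≤ ν 0) (i k : ℕ) :
    Lam (ν (i + k)) ≤ 2 ^ k * Lam (ν i) := by
  induction k with
  | zero => simp
  | succ k ih =>
    have := h.Lam_le h0 (i + k)
    rw [pow_succ, ← add_assoc]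
    linarith

theorem tau_pow_le {ν : ℕ → ℕ} (h : ∀ i, grow (ν i) ≤ ν (i + 1)) (h0 : ∀ i, 2 ≤ ν i) (a i k : ℕ) :
    2 ^ k * tau a (ν i) ≤ tau a (ν (i + k)) := by
  induction k with
  | zero => simp
  | succ k ih =>
    have := two_mul_tau_le a (h0 (i + k)) (h (i + k))
    rw [pow_succ, ← add_assoc]
    linarith

/-- The fraction of the available capacity that holders reach after `k` levels; it tends to `1`. -/
noncomputable def frac : ℕ → ℝ
  | 0 => 0
  | 1 => 0
  | k + 2 => frac (k + 1) / 2 + 1 / 4 + frac k / 4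

theorem frac_nonneg (k : ℕ) : 0 ≤ frac k := by
  induction k using Nat.twoStepInduction with
  | zero => simp [frac]
  | one => simp [frac]
  | more k h0 h1 => rw [frac]; linarith

theorem frac_ge (k : ℕ) : 1 - 8 / 7 * (7 / 8) ^ k ≤ frac k := by
  induction k using Nat.twoStepInduction with
  | zero => norm_num [frac]
  | one => norm_num [frac]
  | more k h0 h1 =>
    have : (0 : ℝ) < (7 / 8) ^ k := by positivity
    rw [frac]
    rw [pow_succ] at h1
    rw [pow_succ, pow_succ]
    linarith

theorem exists_frac_ge {ε : ℝ} (hε : 0 < ε) : ∃ k0, ∀ k, k0 ≤ k → 1 - ε ≤ frac k := by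
  obtain ⟨k0, hk0⟩ := exists_pow_lt_of_lt_one (show 0 < ε * (7 / 8) by positivity)
    (show (7 / 8 : ℝ) < 1 by norm_num)
  refine ⟨k0, fun k hk => ?_⟩
  have h1 := frac_ge k
  have h2 : (7 / 8 : ℝ) ^ k ≤ (7 / 8) ^ k0 :=
    pow_le_pow_of_le_one (by norm_num) (by norm_num) hk
  linarith

/-- The logarithm of the number of data carried by holders at level `j`. -/
noncomputable def zeta (ν : ℕ → ℕ) (a j : ℕ) : ℝ := Real.logb 2 (holds ν a j).card

theorem card_holds_pos {ν : ℕ → ℕ} (h : ∀ i, 2 ≤ ν i) (a j : ℕ) : 0 < (holds ν a j).card := by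
  induction j using Nat.twoStepInduction with
  | zero => simp [holds]
  | one => simp [holds]
  | more j h0 h1 =>
    rw [card_holds]
    exact Nat.mul_pos h1 (Nat.mul_pos (card_vals_pos a (h j)) h0)

theorem zeta_nonneg (ν : ℕ → ℕ) (a j : ℕ) : 0 ≤ zeta ν a j := by
  unfold zeta
  rcases Nat.eq_zero_or_pos (holds ν a j).card with h | h
  · simp [h]
  · exact Real.logb_nonneg (by norm_num) (by exact_mod_cast h)

theorem zeta_add_two {ν : ℕ → ℕ} (h : ∀ i, 2 ≤ ν i) (a j : ℕ) :
    zeta ν a (j + 2) = zeta ν a (j + 1) + (tau a (ν j) + zeta ν a j) := by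
  have h0 : ((holds ν a j).card : ℝ) ≠ 0 := by exact_mod_cast (card_holds_pos h a j).ne'
  have h1 : ((holds ν a (j + 1)).card : ℝ) ≠ 0 := by
    exact_mod_cast (card_holds_pos h a (j + 1)).ne'
  have h2 : ((vals a (ν j)).card : ℝ) ≠ 0 := by exact_mod_cast (card_vals_pos a (h j)).ne'
  unfold zeta tau
  rw [card_holds]
  push_cast
  rw [Real.logb_mul h1 (mul_ne_zero h2 h0), Real.logb_mul h2 h0]

/-- If the values at `a` fill a fraction `τ` of `Λ` at the levels from `i0` on, then so do
eventually the holders. -/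
theorem zeta_ge {ν : ℕ → ℕ} (h : ∀ i, 2 ≤ ν i) {a : ℕ} {Λ : ℕ → ℝ} {τ : ℝ} (hτ : 0 ≤ τ) {i0 J : ℕ}
    (hΛ : ∀ i, Λ (i + 1) ≤ 2 * Λ i)
    (ht : ∀ i, i0 ≤ i → i ≤ J → τ * Λ i ≤ tau a (ν i)) (k : ℕ) (hk : i0 + k ≤ J) :
    τ * frac k * Λ (i0 + k) ≤ zeta ν a (i0 + k) := by
  induction k using Nat.twoStepInduction with
  | zero => simpa [frac] using zeta_nonneg ν a i0
  | one => simpa [frac] using zeta_nonneg ν a (i0 + 1)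
  | more k h0 h1 =>
    have h0 := h0 (by omega)
    have h1 := h1 (by omega)
    rw [← add_assoc] at h1 ⊢
    have h2 := ht (i0 + k) (by omega) (by omega)
    rw [zeta_add_two h, frac]
    have e0 := frac_nonneg k
    have e1 := frac_nonneg (k + 1)
    have l1 := hΛ (i0 + k + 1)
    have l0 := hΛ (i0 + k)
    have m0 : τ * frac k / 4 * Λ (i0 + k + 2) ≤ τ * frac k * Λ (i0 + k) := by
      have : 0 ≤ τ * frac k := by positivity
      nlinarith
    have m1 : τ * frac (k + 1) / 2 * Λ (i0 + k + 2) ≤ τ * frac (k + 1) * Λ (i0 + k + 1) := by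
      have : 0 ≤ τ * frac (k + 1) := by positivity
      nlinarith
    have m2 : τ / 4 * Λ (i0 + k + 2) ≤ τ * Λ (i0 + k) := by nlinarith
    show τ * (frac (k + 1) / 2 + 1 / 4 + frac k / 4) * Λ (i0 + k + 2) ≤ _
    linarith

/-- The tables of finitely many levels fit into one parameter, so that a single parameter serves
all levels up to `J`. -/
theorem stage_all (J : ℕ) : ∃ B, ∀ ν : ℕ → ℕ, B ≤ ν 0 → (∀ i, grow (ν i) ≤ ν (i + 1)) →
    (∀ j, j ≤ J → ¬ Flat (ν j)) → ∀ y n0, ∃ n, n0 ≤ n ∧ ∃ m0, ∀ m, m0 ≤ m → ∀ j, j ≤ J →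
      ∃ u, U (ν j) ≤ 2 * u ∧
      (vals (Nat.pair y n) (ν (j + 2))).card * ((holds ν (Nat.pair y n) (j + 1)).card *
        ((holds ν (Nat.pair y n) j).card * u)) ≤
          (vals (Nat.pair (Nat.pair y n) m) (ν (j + 3))).card := by
  choose B hB using stage_level
  refine ⟨(Finset.range (J + 1)).sup B, fun ν hν hg hfl y n0 => ?_⟩
  choose! g b D O X M hBr using fun j (hj : j ≤ J) => exists_Branching (hfl j hj)
  set D' := (Finset.range (J + 1)).sup fun j => Nat.pair j (D j) with hD'
  obtain ⟨c, hc⟩ := exists_glook (fun k => g k.unpair.1 k.unpair.2) D'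
  set b' := (Finset.range (J + 1)).sup b with hb'
  refine ⟨Nat.pair c (Nat.pair b' n0), (Nat.right_le_pair _ _).trans (Nat.right_le_pair _ _), ?_⟩
  have hm : ∀ j, ∃ m0, j ≤ J → ∀ m, m0 ≤ m →
      (vals (Nat.pair y (Nat.pair c (Nat.pair b' n0))) (ν (j + 2))).card *
        ((holds ν (Nat.pair y (Nat.pair c (Nat.pair b' n0))) (j + 1)).card *
        ((holds ν (Nat.pair y (Nat.pair c (Nat.pair b' n0))) j).card * (O j).card)) ≤
      (vals (Nat.pair (Nat.pair y (Nat.pair c (Nat.pair b' n0))) m) (ν (j + 3))).card := by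
    intro j
    by_cases hj : j ≤ J
    · have hjr : j ∈ Finset.range (J + 1) := by simp; omega
      obtain ⟨m0, hm0⟩ := hB j ν ((Finset.le_sup hjr).trans hν) hg _ _ _ _ _ _ (hBr j hj) y c b' n0
        (Finset.le_sup hjr) (fun μ hμ => by
          rw [hc _ ((Nat.pair_lt_pair_right j hμ).trans_le
            (Finset.le_sup (f := fun j => Nat.pair j (D j)) hjr))]
          simp) _ rfl
      exact ⟨m0, fun _ => hm0⟩
    · exact ⟨0, fun h => (hj h).elim⟩
  choose m0 hm0 using hm
  refine ⟨(Finset.range (J + 1)).sup m0, fun m hm j hj => ⟨(O j).card, (hBr j hj).1, ?_⟩⟩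
  exact hm0 j hj m ((Finset.le_sup (by simp; omega)).trans hm)

/-- Unless some level is flat, there are points `(y, n)` at which the values of the codes below
`ν j` fill a fraction `τ` of the capacity, on all levels from some level on. -/
def Stage (τ : ℝ) : Prop := ∃ j0, ∀ J, ∃ B, ∀ ν, Good ν → B ≤ ν 0 →
  (∀ j, j ≤ J → ¬ Flat (ν j)) → ∃ y n0, ∀ n, n0 ≤ n → ∀ j, j0 ≤ j → j ≤ J →
    τ * Lam (ν j) ≤ tau (Nat.pair y n) (ν j)

theorem stage_zero : Stage 0 :=
  ⟨0, fun _ => ⟨0, fun _ _ _ _ => ⟨0, 0, fun _ _ _ _ _ => by simpa using tau_nonneg _ _⟩⟩⟩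

theorem stage_succ {τ : ℝ} (h0 : 0 ≤ τ) (h1 : τ < 1) (h : Stage τ) : Stage ((15 * τ + 1) / 16) := by
  obtain ⟨j0, hj0⟩ := h
  obtain ⟨k0, hk0⟩ := exists_frac_ge (show 0 < (1 - τ) / 12 by linarith)
  refine ⟨j0 + k0 + 3, fun J => ?_⟩
  obtain ⟨B1, hB1⟩ := hj0 J
  obtain ⟨B2, hB2⟩ := stage_all J
  obtain ⟨B3, hB3⟩ := Lam_unbounded (224 / (1 - τ))
  refine ⟨max (max B1 B2) (max B3 2), fun ν hg hν hfl => ?_⟩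
  simp only [max_le_iff] at hν
  obtain ⟨⟨hν1, hν2⟩, hν3, hν4⟩ := hν
  have h2 : ∀ i, 2 ≤ ν i := fun i => hν4.trans (hg.le i)
  obtain ⟨y, n0, hy⟩ := hB1 ν hg hν1 hfl
  obtain ⟨n, hn, m0, hm⟩ := hB2 ν hν2 (fun i => (hg i).1) hfl y n0
  refine ⟨Nat.pair y n, m0, fun m hm0 j hj hjJ => ?_⟩
  obtain ⟨i, rfl⟩ : ∃ i, j = j0 + (k0 + i) + 3 := ⟨j - (j0 + k0 + 3), by omega⟩
  set k := k0 + i with hk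
  obtain ⟨u, hu, hcard⟩ := hm m hm0 (j0 + k) (by omega)
  set a := Nat.pair y n with ha
  have hL := fun i => hg.Lam_le (by omega) i
  have z0 := zeta_ge h2 h0 hL (hy n hn) k (by omega)
  have z1 := zeta_ge h2 h0 hL (hy n hn) (k + 1) (by omega)
  rw [← add_assoc] at z1
  have t2 := hy n hn (j0 + k + 2) (by omega) (by omega)
  have f0 := hk0 k (by omega)
  have f1 := hk0 (k + 1) (by omega)
  -- taking logarithms of `hcard`
  have hlog : tau a (ν (j0 + k + 2)) + (zeta ν a (j0 + k + 1) + (zeta ν a (j0 + k) +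
      (Lam (ν (j0 + k)) - 7))) ≤ tau (Nat.pair a m) (ν (j0 + k + 3)) := by
    have p0 := card_vals_pos a (h2 (j0 + k + 2))
    have p1 := card_holds_pos h2 a (j0 + k)
    have p2 := card_holds_pos h2 a (j0 + k + 1)
    have p3 : 1 ≤ U (ν (j0 + k)) := U_pos ((by norm_num : 1 ≤ 2).trans (h2 _))
    have p4 : 0 < u := by omega
    have hu' : (U (ν (j0 + k)) : ℝ) ≤ 2 * u := by exact_mod_cast hu
    have l1 := Real.logb_le_logb_of_le (b := 2) (by norm_num) (by exact_mod_cast p3) hu'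
    rw [Real.logb_mul (by norm_num) (by exact_mod_cast p4.ne'),
      Real.logb_self_eq_one (by norm_num)] at l1
    have l2 : ((vals a (ν (j0 + k + 2))).card : ℝ) * ((holds ν a (j0 + k + 1)).card *
        ((holds ν a (j0 + k)).card * u)) ≤ (vals (Nat.pair a m) (ν (j0 + k + 3))).card := by
      exact_mod_cast hcard
    have q0 : ((vals a (ν (j0 + k + 2))).card : ℝ) ≠ 0 := by exact_mod_cast p0.ne'
    have q1 : ((holds ν a (j0 + k)).card : ℝ) ≠ 0 := by exact_mod_cast p1.ne'
    have q2 : ((holds ν a (j0 + k + 1)).card : ℝ) ≠ 0 := by exact_mod_cast p2.ne'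
    have q4 : (u : ℝ) ≠ 0 := by exact_mod_cast p4.ne'
    have l3 := Real.logb_le_logb_of_le (b := 2) (by norm_num) (by positivity) l2
    rw [Real.logb_mul q0 (mul_ne_zero q2 (mul_ne_zero q1 q4)), Real.logb_mul q2 (mul_ne_zero q1 q4),
      Real.logb_mul q1 q4] at l3
    unfold tau zeta Lam
    linarith
  have L0 := hL (j0 + k)
  have L1 := hL (j0 + k + 1)
  have L2 := hL (j0 + k + 2)
  have L3 : 224 / (1 - τ) ≤ Lam (ν (j0 + k + 3)) := hB3 _ (hν3.trans (hg.le _))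
  rw [div_le_iff₀ (by linarith)] at L3
  have hd : j0 + (k0 + i) + 3 = j0 + k + 3 := rfl
  rw [hd]
  set l0 := Lam (ν (j0 + k))
  set l1 := Lam (ν (j0 + k + 1))
  set l2 := Lam (ν (j0 + k + 2))
  set l3 := Lam (ν (j0 + k + 3))
  have l3p : 0 < l3 := lt_of_lt_of_le (by norm_num) (Lam_ge ((by norm_num : 1 ≤ 2).trans (h2 _)))
  have c0 : 1 / 8 * l3 ≤ l0 := by linarith
  have c1 : 1 / 4 * l3 ≤ l1 := by linarith
  have c2 : 1 / 2 * l3 ≤ l2 := by linarith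
  set γ := 1 - (1 - τ) / 12 with hγ
  have hγ0 : 0 ≤ γ := by linarith
  have d2 : τ * (1 / 2 * l3) ≤ τ * l2 := mul_le_mul_of_nonneg_left c2 h0
  have d1 : τ * γ * (1 / 4 * l3) ≤ τ * frac (k + 1) * l1 :=
    mul_le_mul (mul_le_mul_of_nonneg_left f1 h0) c1 (by positivity)
      (mul_nonneg h0 (frac_nonneg _))
  have d0 : τ * γ * (1 / 8 * l3) ≤ τ * frac k * l0 :=
    mul_le_mul (mul_le_mul_of_nonneg_left f0 h0) c0 (by positivity)
      (mul_nonneg h0 (frac_nonneg _))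
  have e1 : τ * (1 - τ) * l3 ≤ (1 - τ) * l3 := by
    have : 0 ≤ (1 - τ) * l3 := mul_nonneg (by linarith) l3p.le
    nlinarith
  have e2 : τ * γ * (1 / 8 * l3) + τ * γ * (1 / 4 * l3) =
      τ * l3 * 3 / 8 - τ * (1 - τ) * l3 / 32 := by rw [hγ]; ring
  nlinarith

theorem exists_stage {τ : ℝ} (h : τ < 1) : ∃ τ', τ < τ' ∧ τ' < 1 ∧ Stage τ' := by
  have key : ∀ s : ℕ, Stage (1 - (15 / 16) ^ s) := by
    intro s
    induction s with
    | zero => simpa using stage_zero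
    | succ s ih =>
      have h2 : ((15 : ℝ) / 16) ^ s ≤ 1 := pow_le_one₀ (by norm_num) (by norm_num)
      have h3 : (0 : ℝ) < (15 / 16) ^ s := by positivity
      have := stage_succ (by linarith) (by linarith) ih
      rw [pow_succ]
      convert this using 1
      ring
  obtain ⟨s, hs⟩ := exists_pow_lt_of_lt_one (show 0 < 1 - τ by linarith)
    (show (15 / 16 : ℝ) < 1 by norm_num)
  exact ⟨_, by linarith, by have : (0 : ℝ) < (15 / 16) ^ s := by positivity
                            linarith, key s⟩

/-- At some point `x`, the codes below `N` take nearly as many values as a query tree can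
distinguish among them. -/
theorem exists_point {τ : ℝ} (h0 : 0 ≤ τ) (h : τ < 1) :
    ∃ B, ∀ N, B ≤ N → ∃ x, τ * Lam (N + 1) ≤ tau x N := by
  obtain ⟨τ', h1, h2, J, hJ⟩ := exists_stage h
  obtain ⟨B1, hB1⟩ := hJ J
  obtain ⟨B2, hB2⟩ := Lam_unbounded (max (8 / (1 - τ')) (τ / (τ' - τ)))
  obtain ⟨B, hB⟩ := exists_Good J (max B1 (max B2 2))
  refine ⟨B, fun N hN => ?_⟩
  obtain ⟨ν, hg, hνJ, hν⟩ := hB N hN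
  simp only [max_le_iff] at hν
  obtain ⟨hν1, hν2, hν3⟩ := hν
  have hLj : ∀ j, _ ≤ Lam (ν j) := fun j => hB2 _ (hν2.trans (hg.le j))
  suffices hx : ∃ x, τ' * Lam N ≤ tau x N by
    obtain ⟨x, hx⟩ := hx
    refine ⟨x, le_trans ?_ hx⟩
    have hL := Lam_succ_le (N := N) (by rw [← hνJ]; have := hg.le J; omega)
    have h3 := (le_max_right _ _).trans (hLj J)
    rw [hνJ, div_le_iff₀ (by linarith)] at h3
    nlinarith
  by_cases hfl : ∀ j, j ≤ J → ¬ Flat (ν j)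
  · obtain ⟨y, n, hy⟩ := hB1 ν hg hν1 hfl
    exact ⟨_, by simpa [hνJ] using hy n le_rfl J le_rfl le_rfl⟩
  · push Not at hfl
    obtain ⟨j, hj, q, hq⟩ := hfl
    refine ⟨q, ?_⟩
    have h2' : ∀ i, 2 ≤ ν i := fun i => hν3.trans (hg.le i)
    obtain ⟨k, rfl⟩ : ∃ k, J = j + k := ⟨J - j, by omega⟩
    have t1 := tau_pow_le (fun i => (hg i).1) h2' q j k
    have t2 := hg.Lam_le_pow (by omega) j k
    have h3 := (le_max_left _ _).trans (hLj j)
    rw [div_le_iff₀ (by linarith)] at h3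
    have p0 := card_vals_pos q (h2' j)
    have p3 : 1 ≤ U (ν j) := U_pos ((by norm_num : 1 ≤ 2).trans (h2' _))
    have hu : (U (ν j) : ℝ) ≤ 2 ^ 2 * (vals q (ν j)).card := by
      exact_mod_cast hq.trans (by omega)
    have l1 := Real.logb_le_logb_of_le (b := 2) (by norm_num) (by exact_mod_cast p3) hu
    rw [Real.logb_mul (by norm_num) (by exact_mod_cast p0.ne'), Real.logb_pow,
      Real.logb_self_eq_one (by norm_num)] at l1
    have l2 : Lam (ν j) - 8 ≤ tau q (ν j) := by unfold Lam tau; push_cast at l1; linarith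
    rw [hνJ] at t1 t2
    have hτ' : 0 ≤ τ' := by linarith
    calc τ' * Lam N ≤ τ' * (2 ^ k * Lam (ν j)) := mul_le_mul_of_nonneg_left t2 hτ'
      _ = 2 ^ k * (τ' * Lam (ν j)) := by ring
      _ ≤ 2 ^ k * tau q (ν j) := by gcongr; linarith
      _ ≤ tau q N := t1

/-! ### Matching two enumerations -/

theorem prim_forall_lt {α : Type} [Primcodable α] {R : ℕ → α → Prop} (hR : PrimrecRel R)
    {f : α → ℕ} (hf : Primrec f) : PrimrecPred fun v => ∀ i < f v, R i v := by
  have hid : Primrec fun v : α => v := Primrec.id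
  exact (PrimrecRel.comp hR.forall_mem_list (Primrec.list_range.comp hf) hid).of_eq
    fun v => by simp

theorem prim_exists_lt {α : Type} [Primcodable α] {R : ℕ → α → Prop} (hR : PrimrecRel R)
    {f : α → ℕ} (hf : Primrec f) : PrimrecPred fun v => ∃ i < f v, R i v := by
  have hid : Primrec fun v : α => v := Primrec.id
  exact (PrimrecRel.comp hR.exists_mem_list (Primrec.list_range.comp hf) hid).of_eq
    fun v => by simp

theorem exists_rfind_code {S : ℕ → ℕ → Prop} (hS : PrimrecRel S) : ∃ F : Code, ∀ v w, S v w →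
    ∃ w', S v w' ∧ (∀ i, S v i → w' ≤ i) ∧ F.eval v = Part.some w' := by
  classical
  have hc : Computable₂ fun v w : ℕ => decide (S v w) := by
    have : Primrec fun b : ℕ × ℕ => decide (S b.1 b.2) :=
      (PrimrecRel.comp hS Primrec.fst Primrec.snd).decide
    exact this.to_comp
  have hp := Partrec.rfind hc.partrec₂
  obtain ⟨F, hF⟩ := Code.exists_code.1 (Partrec.nat_iff.1 hp)
  refine ⟨F, fun v w h => ?_⟩
  have hex : ∃ w, S v w := ⟨w, h⟩
  refine ⟨Nat.find hex, Nat.find_spec hex, fun i hi => Nat.find_min' hex hi, ?_⟩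
  rw [hF, Part.eq_some_iff]
  refine Nat.mem_rfind.2 ⟨?_, fun {m} hm => ?_⟩
  · simpa using Nat.find_spec hex
  · simpa using Nat.find_min hex hm

/-- The relation `R P (s, z)` says that `z` is enumerated at stage `s` with parameter `P`; it is
fresh at `u = (s, z)` if `z` was not enumerated at a smaller index. -/
def Fresh (R : ℕ → ℕ → Prop) (P u : ℕ) : Prop :=
  R P u ∧ ∀ u' < u, ¬ (R P u' ∧ u'.unpair.2 = u.unpair.2)

theorem primrec_fresh {R : ℕ → ℕ → Prop} (hR : PrimrecRel R) : PrimrecRel (Fresh R) := by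
  have h1 : PrimrecRel fun (u' : ℕ) (b : ℕ × ℕ) => ¬ (R b.1 u' ∧ u'.unpair.2 = b.2.unpair.2) :=
    PrimrecPred.not (PrimrecPred.and (PrimrecRel.comp hR (Primrec.fst.comp Primrec.snd) Primrec.fst)
      (Primrec.eq.comp (prim_right Primrec.fst) (prim_right (Primrec.snd.comp Primrec.snd))))
  exact PrimrecPred.and (PrimrecRel.comp hR Primrec.fst Primrec.snd)
    (prim_forall_lt h1 Primrec.snd)

open Classical in
/-- The number of fresh indices below `u`. -/
noncomputable def rank (R : ℕ → ℕ → Prop) (P u : ℕ) : ℕ := Nat.count (Fresh R P) u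

theorem primrec_rank {R : ℕ → ℕ → Prop} (hR : PrimrecRel R) : Primrec₂ (rank R) := by
  classical
  have h1 : Primrec₂ fun (P : ℕ) (y : ℕ × ℕ) => y.2 + if Fresh R P y.1 then 1 else 0 :=
    Primrec.nat_add.comp (Primrec.snd.comp Primrec.snd) (Primrec.ite
      (PrimrecRel.comp (primrec_fresh hR) Primrec.fst (Primrec.fst.comp Primrec.snd))
      (Primrec.const 1) (Primrec.const 0))
  refine (Primrec.nat_rec (Primrec.const 0) h1).of_eq fun P u => ?_
  unfold rank
  induction u with
  | zero => simp
  | succ u ih => rw [Nat.count_succ, ← ih]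

theorem exists_fresh {R : ℕ → ℕ → Prop} {P s z : ℕ} (h : R P (Nat.pair s z)) :
    ∃ u, Fresh R P u ∧ u.unpair.2 = z := by
  classical
  have hex : ∃ u, R P u ∧ u.unpair.2 = z := ⟨_, h, by simp⟩
  obtain ⟨h1, h2⟩ := Nat.find_spec hex
  exact ⟨Nat.find hex, ⟨h1, fun u' hu' h' => Nat.find_min hex hu' ⟨h'.1, h'.2.trans h2⟩⟩, h2⟩

theorem Fresh.inj {R : ℕ → ℕ → Prop} {P u u' : ℕ} (h : Fresh R P u) (h' : Fresh R P u')
    (he : u.unpair.2 = u'.unpair.2) : u = u' := by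
  rcases lt_trichotomy u u' with hlt | heq | hlt
  · exact (h'.2 u hlt ⟨h.1, he⟩).elim
  · exact heq
  · exact (h.2 u' hlt ⟨h'.1, he.symm⟩).elim

theorem Fresh.mem {R : ℕ → ℕ → Prop} {P u : ℕ} {A : Finset ℕ}
    (hA : ∀ z, z ∈ A ↔ ∃ s, R P (Nat.pair s z)) (h : Fresh R P u) : u.unpair.2 ∈ A :=
  (hA _).2 ⟨u.unpair.1, by rw [Nat.pair_unpair]; exact h.1⟩

/-- If two uniformly enumerable finite sets satisfy `|B| ≤ |A|`, a fixed program maps `A` onto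
`B` (at least), by matching the order of enumeration. -/
theorem exists_onto_code {RA RB : ℕ → ℕ → Prop} (hRA : PrimrecRel RA) (hRB : PrimrecRel RB) :
    ∃ h : Code, ∀ (P : ℕ) (A B : Finset ℕ), (∀ z, z ∈ A ↔ ∃ s, RA P (Nat.pair s z)) →
      (∀ z, z ∈ B ↔ ∃ s, RB P (Nat.pair s z)) → B.card ≤ A.card →
      ∀ b ∈ B, ∃ z ∈ A, h.eval (Nat.pair P z) = Part.some b := by
  classical
  have hS : PrimrecRel fun v w : ℕ => (Fresh RA v.unpair.1 w.unpair.1 ∧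
      w.unpair.1.unpair.2 = v.unpair.2) ∧ (Fresh RB v.unpair.1 w.unpair.2 ∧
      rank RA v.unpair.1 w.unpair.1 = rank RB v.unpair.1 w.unpair.2) := by
    have hv := prim_left (α := ℕ × ℕ) Primrec.fst
    have hv2 := prim_right (α := ℕ × ℕ) Primrec.fst
    have hw := prim_left (α := ℕ × ℕ) Primrec.snd
    have hw2 := prim_right (α := ℕ × ℕ) Primrec.snd
    exact ((PrimrecRel.comp (primrec_fresh hRA) hv hw).and
      (Primrec.eq.comp (prim_right hw) hv2)).and
      ((PrimrecRel.comp (primrec_fresh hRB) hv hw2).and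
      (Primrec.eq.comp ((primrec_rank hRA).comp hv hw) ((primrec_rank hRB).comp hv hw2)))
  obtain ⟨F, hF⟩ := exists_rfind_code hS
  obtain ⟨r, hr⟩ := exists_code_of_primrec (prim_right (prim_right (Primrec.id (α := ℕ))))
  refine ⟨Code.comp r F, fun P A B hA hB hle b hb => ?_⟩
  obtain ⟨s, hs⟩ := (hB b).1 hb
  obtain ⟨u', hu', hub⟩ := exists_fresh hs
  -- the number of fresh indices for `A`
  have hfin : (Set.ofPred (Fresh RA P)).Finite := by
    refine Set.Finite.of_finite_image (f := fun u => u.unpair.2)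
      (A.finite_toSet.subset ?_) fun u hu v hv h => Fresh.inj hu hv h
    rintro _ ⟨u, hu, rfl⟩
    exact Fresh.mem hA hu
  have hcA : A.card ≤ hfin.toFinset.card := by
    refine Finset.card_le_card_of_surjOn (fun u => u.unpair.2) fun z hz => ?_
    obtain ⟨s, hs⟩ := (hA z).1 hz
    obtain ⟨u, hu, huz⟩ := exists_fresh hs
    exact ⟨u, by simpa using hu, huz⟩
  have hcB : rank RB P u' < B.card := by
    have h1 : rank RB P u' + 1 = Nat.count (Fresh RB P) (u' + 1) := by
      rw [Nat.count_succ, if_pos hu']; rfl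
    rw [← Nat.succ_le_iff, Nat.succ_eq_add_one, h1, Nat.count_eq_card_filter_range]
    refine Finset.card_le_card_of_injOn (fun u => u.unpair.2) ?_ ?_
    · intro u hu
      exact Fresh.mem hB (Finset.mem_filter.1 hu).2
    · intro u hu v hv h
      exact Fresh.inj (Finset.mem_filter.1 hu).2 (Finset.mem_filter.1 hv).2 h
  have hlt : rank RB P u' < hfin.toFinset.card := by omega
  have hmem := Nat.nth_mem_of_lt_card hfin hlt
  have hcount := Nat.count_nth_of_lt_card_finite hfin hlt
  set u := Nat.nth (Fresh RA P) (rank RB P u') with hu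
  refine ⟨u.unpair.2, Fresh.mem hA hmem, ?_⟩
  obtain ⟨w, ⟨⟨h1, h2⟩, h3, h4⟩, -, hw⟩ := hF (Nat.pair P u.unpair.2) (Nat.pair u u') (by
    simpa using ⟨hmem, hu', hcount⟩)
  simp only [Nat.unpair_pair] at h1 h2 h3 h4
  rw [eval_comp_of_eq hw, hr]
  have e1 : w.unpair.1 = u := Fresh.inj h1 hmem h2
  have e2 : w.unpair.2 = u' := by
    refine Nat.count_injective h3 hu' ?_
    show rank RB P _ = rank RB P _
    rw [← h4, e1]
    exact hcount
  rw [← hub, ← e2]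
  rfl

/-! ### The data carried by a chain of holders -/

/-- The data collected by composing holders at the levels below `m`, starting from `p`. -/
noncomputable def chain (ν : ℕ → ℕ) (x p : ℕ) : ℕ → Finset ℕ
  | 0 => {p}
  | m + 1 => (chain ν x p m ×ˢ holds ν x m).image fun r => Nat.pair r.1 r.2

theorem card_chain_succ (ν : ℕ → ℕ) (x p m : ℕ) :
    (chain ν x p (m + 1)).card = (chain ν x p m).card * (holds ν x m).card := by
  rw [chain, Finset.card_image_of_injective, Finset.card_product]
  rintro ⟨u, v⟩ ⟨u', v'⟩ h
  simp only [Nat.pair_eq_pair] at h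
  obtain ⟨rfl, rfl⟩ := h
  rfl

theorem card_chain_pos {ν : ℕ → ℕ} (h : ∀ i, 2 ≤ ν i) (x p m : ℕ) : 0 < (chain ν x p m).card := by
  induction m with
  | zero => simp [chain]
  | succ m ih => rw [card_chain_succ]; exact Nat.mul_pos ih (card_holds_pos h x m)

theorem logb_card_chain {ν : ℕ → ℕ} (h : ∀ i, 2 ≤ ν i) (x p m : ℕ) :
    Real.logb 2 (chain ν x p m).card = ∑ i ∈ Finset.range m, zeta ν x i := by
  induction m with
  | zero => simp [chain]
  | succ m ih =>
    rw [card_chain_succ, Finset.sum_range_succ, ← ih]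
    push_cast
    exact Real.logb_mul (by exact_mod_cast (card_chain_pos h x p m).ne')
      (by exact_mod_cast (card_holds_pos h x m).ne')

/-- Every datum of a chain is output, together with the point `x`, by a short code. -/
theorem exists_chain_code (m : ℕ) : ∃ B, ∀ ν : ℕ → ℕ, B ≤ ν 0 → (∀ i, grow (ν i) ≤ ν (i + 1)) →
    ∀ x p, 1 ≤ p → (∃ e ∈ below (ν 0), e.eval 0 = Part.some (Nat.pair x p)) →
    ∀ w ∈ chain ν x p m, 1 ≤ w ∧ ∃ e ∈ below (ν m), e.eval 0 = Part.some (Nat.pair x w) := by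
  induction m with
  | zero =>
    refine ⟨0, fun ν _ _ x p hp he w hw => ?_⟩
    rw [chain, Finset.mem_singleton] at hw
    subst hw
    exact ⟨hp, he⟩
  | succ m ih =>
    obtain ⟨B1, hB1⟩ := ih
    obtain ⟨B2, hB2⟩ := exists_holder m Code.id
    refine ⟨max B1 B2, fun ν hν hg x p hp he w hw => ?_⟩
    simp only [chain, Finset.mem_image, Finset.mem_product, Prod.exists] at hw
    obtain ⟨w', z, ⟨hw', hz⟩, rfl⟩ := hw
    obtain ⟨h1, e1, he1, h2⟩ := hB1 ν (le_of_max_le_left hν) hg x p hp he w' hw'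
    obtain ⟨e2, he2, h3⟩ := hB2 ν (le_of_max_le_right hν) hg x z hz
    refine ⟨h1.trans (Nat.left_le_pair _ _), Code.comp e2 e1,
      below_mono (hg m) (comp_mem_below.2 ⟨he2, he1⟩), ?_⟩
    rw [eval_comp_of_eq h2, h3 w' h1, Code.eval_id]

/-- A given program `H` can be fused into the last holder of a chain. -/
theorem exists_chain_code_comp (m : ℕ) (H : Code) : ∃ B, ∀ ν : ℕ → ℕ, B ≤ ν 0 →
    (∀ i, grow (ν i) ≤ ν (i + 1)) → ∀ x p, 1 ≤ p →
    (∃ e ∈ below (ν 0), e.eval 0 = Part.some (Nat.pair x p)) →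
    ∀ w ∈ chain ν x p (m + 1), ∃ e ∈ below (ν (m + 1)), e.eval 0 = H.eval (Nat.pair x w) := by
  obtain ⟨B1, hB1⟩ := exists_chain_code m
  obtain ⟨B2, hB2⟩ := exists_holder m H
  refine ⟨max B1 B2, fun ν hν hg x p hp he w hw => ?_⟩
  simp only [chain, Finset.mem_image, Finset.mem_product, Prod.exists] at hw
  obtain ⟨w', z, ⟨hw', hz⟩, rfl⟩ := hw
  obtain ⟨h1, e1, he1, h2⟩ := hB1 ν (le_of_max_le_left hν) hg x p hp he w' hw'
  obtain ⟨e2, he2, h3⟩ := hB2 ν (le_of_max_le_right hν) hg x z hz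
  refine ⟨Code.comp e2 e1, below_mono (hg m) (comp_mem_below.2 ⟨he2, he1⟩), ?_⟩
  have h4 := h3 w' h1
  rw [eval_comp_of_eq h2, h4]

/-! ### Enumerating the data of a chain -/

/-- `y` is enumerated into `vals x N` within `s` steps. -/
def ValsBy (N x s y : ℕ) : Prop :=
  1 ≤ y ∧ ∃ e < N, Code.evaln s (Denumerable.ofNat Code e) x = some y

/-- `z` is enumerated into `holds ν x j` within `s` steps, where `ν i = grow^[i + q] N`. -/
def HoldsBy (N q x s : ℕ) : ℕ → ℕ → Prop
  | 0, z => z = 0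
  | 1, z => z = 0
  | j + 2, z => HoldsBy N q x s (j + 1) z.unpair.1 ∧
      ValsBy (grow^[j + q] N) x s z.unpair.2.unpair.1 ∧ HoldsBy N q x s j z.unpair.2.unpair.2

/-- `w` is enumerated into `chain ν x p m` within `s` steps, where `ν i = grow^[i + q] N`. -/
def ChainBy (N q x s p : ℕ) : ℕ → ℕ → Prop
  | 0, w => w = p
  | m + 1, w => ChainBy N q x s p m w.unpair.1 ∧ HoldsBy N q x s m w.unpair.2

theorem ValsBy.mono {N x s s' y : ℕ} (h : s ≤ s') (hy : ValsBy N x s y) : ValsBy N x s' y := by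
  obtain ⟨h1, e, he, h2⟩ := hy
  exact ⟨h1, e, he, Code.evaln_mono h h2⟩

theorem HoldsBy.mono {N q x s s' : ℕ} (h : s ≤ s') {j : ℕ} : ∀ {z : ℕ},
    HoldsBy N q x s j z → HoldsBy N q x s' j z := by
  induction j using Nat.twoStepInduction with
  | zero => exact id
  | one => exact id
  | more j h0 h1 =>
    intro z hz
    rw [HoldsBy] at hz ⊢
    exact ⟨h1 hz.1, hz.2.1.mono h, h0 hz.2.2⟩

theorem ChainBy.mono {N q x s s' p : ℕ} (h : s ≤ s') {m : ℕ} : ∀ {w : ℕ},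
    ChainBy N q x s p m w → ChainBy N q x s' p m w := by
  induction m with
  | zero => exact id
  | succ m ih =>
    intro w hw
    rw [ChainBy] at hw ⊢
    exact ⟨ih hw.1, hw.2.mono h⟩

theorem mem_vals_iff_valsBy {N x y : ℕ} : y ∈ vals x N ↔ ∃ s, ValsBy N x s y := by
  rw [mem_vals]
  constructor
  · rintro ⟨h1, e, he, h2⟩
    obtain ⟨s, hs⟩ := Code.evaln_complete.1 (ev_eq_some.1 h2)
    exact ⟨s, h1, Encodable.encode e, mem_below.1 he, by rw [Denumerable.ofNat_encode]; exact hs⟩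
  · rintro ⟨s, h1, e, he, h2⟩
    exact ⟨h1, Denumerable.ofNat Code e, mem_below.2 (by rwa [Denumerable.encode_ofNat]),
      ev_eq_some.2 (Code.evaln_sound h2)⟩

theorem mem_holds_iff_holdsBy {N q x j : ℕ} : ∀ {z : ℕ},
    z ∈ holds (fun i => grow^[i + q] N) x j ↔ ∃ s, HoldsBy N q x s j z := by
  induction j using Nat.twoStepInduction with
  | zero => simp [holds, HoldsBy]
  | one => simp [holds, HoldsBy]
  | more j h0 h1 =>
    intro z
    have hz : z ∈ holds (fun i => grow^[i + q] N) x (j + 2) ↔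
        z.unpair.1 ∈ holds (fun i => grow^[i + q] N) x (j + 1) ∧
        z.unpair.2.unpair.1 ∈ vals x (grow^[j + q] N) ∧
        z.unpair.2.unpair.2 ∈ holds (fun i => grow^[i + q] N) x j := by
      simp only [holds, Finset.mem_image, Finset.mem_product, Prod.exists]
      constructor
      · rintro ⟨a, b, c, h, rfl⟩
        simpa using h
      · intro h
        exact ⟨_, _, _, h, by simp⟩
    rw [hz, h0, h1, mem_vals_iff_valsBy]
    constructor
    · rintro ⟨⟨s1, a1⟩, ⟨s2, a2⟩, s3, a3⟩
      refine ⟨max s1 (max s2 s3), ?_⟩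
      rw [HoldsBy]
      exact ⟨a1.mono (by omega), a2.mono (by omega), a3.mono (by omega)⟩
    · rintro ⟨s, h⟩
      rw [HoldsBy] at h
      exact ⟨⟨s, h.1⟩, ⟨s, h.2.1⟩, s, h.2.2⟩

theorem mem_chain_iff_chainBy {N q x p m : ℕ} : ∀ {w : ℕ},
    w ∈ chain (fun i => grow^[i + q] N) x p m ↔ ∃ s, ChainBy N q x s p m w := by
  induction m with
  | zero => simp [chain, ChainBy]
  | succ m ih =>
    intro w
    have hw : w ∈ chain (fun i => grow^[i + q] N) x p (m + 1) ↔
        w.unpair.1 ∈ chain (fun i => grow^[i + q] N) x p m ∧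
        w.unpair.2 ∈ holds (fun i => grow^[i + q] N) x m := by
      simp only [chain, Finset.mem_image, Finset.mem_product, Prod.exists]
      constructor
      · rintro ⟨a, b, h, rfl⟩
        simpa using h
      · intro h
        exact ⟨_, _, h, by simp⟩
    rw [hw, ih, mem_holds_iff_holdsBy]
    constructor
    · rintro ⟨⟨s1, a1⟩, s2, a2⟩
      exact ⟨max s1 s2, a1.mono (by omega), a2.mono (by omega)⟩
    · rintro ⟨s, h⟩
      exact ⟨⟨s, h.1⟩, s, h.2⟩

/-- The parameter of a chain is its innermost component. -/
theorem left_iterate_of_mem_chain {ν : ℕ → ℕ} {x p m : ℕ} : ∀ {w : ℕ}, w ∈ chain ν x p m →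
    (fun y => (Nat.unpair y).1)^[m] w = p := by
  induction m with
  | zero => simp [chain]
  | succ m ih =>
    intro w hw
    simp only [chain, Finset.mem_image, Finset.mem_product, Prod.exists] at hw
    obtain ⟨a, b, h, rfl⟩ := hw
    simpa using ih h.1

theorem prim_grow_iterate {α : Type} [Primcodable α] {f g : α → ℕ} (hf : Primrec f)
    (hg : Primrec g) : Primrec fun v => grow^[f v] (g v) := by
  have h1 : Primrec₂ fun (_ : α) (N : ℕ) => grow N := by
    have : Primrec grow := by
      refine (Primrec.nat_add.comp (Primrec.nat_mul.comp (Primrec.const 4)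
        (Primrec.nat_mul.comp Primrec.id Primrec.id)) (Primrec.const 4)).of_eq fun N => ?_
      simp [grow, pow_two]
    exact this.comp Primrec.snd
  exact Primrec.nat_iterate hf hg h1

theorem prim_outputBy {α : Type} [Primcodable α] {N x s y : α → ℕ} (hN : Primrec N)
    (hx : Primrec x) (hs : Primrec s) (hy : Primrec y) : PrimrecPred fun v =>
      ∃ e < N v, Code.evaln (s v) (Denumerable.ofNat Code e) (x v) = some (y v) := by
  have hR : PrimrecRel fun (e : ℕ) (v : α) =>
      Code.evaln (s v) (Denumerable.ofNat Code e) (x v) = some (y v) :=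
    Primrec.eq.comp (Code.primrec_evaln.comp (((hs.comp Primrec.snd).pair
      ((Primrec.ofNat Code).comp Primrec.fst)).pair (hx.comp Primrec.snd)))
      (Primrec.option_some.comp (hy.comp Primrec.snd))
  exact prim_exists_lt hR hN

theorem prim_valsBy {α : Type} [Primcodable α] {N x s y : α → ℕ} (hN : Primrec N)
    (hx : Primrec x) (hs : Primrec s) (hy : Primrec y) :
    PrimrecPred fun v => ValsBy (N v) (x v) (s v) (y v) :=
  (Primrec.nat_le.comp (Primrec.const 1) hy).and (prim_outputBy hN hx hs hy)

theorem prim_holdsBy {α : Type} [Primcodable α] {N q x s : α → ℕ} (hN : Primrec N)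
    (hq : Primrec q) (hx : Primrec x) (hs : Primrec s) (j : ℕ) : ∀ {z : α → ℕ}, Primrec z →
      PrimrecPred fun v => HoldsBy (N v) (q v) (x v) (s v) j (z v) := by
  induction j using Nat.twoStepInduction with
  | zero => exact fun hz => Primrec.eq.comp hz (Primrec.const 0)
  | one => exact fun hz => Primrec.eq.comp hz (Primrec.const 0)
  | more j h0 h1 =>
    intro z hz
    have h := (h1 (prim_left hz)).and ((prim_valsBy (prim_grow_iterate
      (Primrec.nat_add.comp (Primrec.const j) hq) hN) hx hs (prim_left (prim_right hz))).and
      (h0 (prim_right (prim_right hz))))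
    exact h.of_eq fun v => by rw [HoldsBy]

theorem prim_chainBy {α : Type} [Primcodable α] {N q x s p : α → ℕ} (hN : Primrec N)
    (hq : Primrec q) (hx : Primrec x) (hs : Primrec s) (hp : Primrec p) (m : ℕ) :
    ∀ {w : α → ℕ}, Primrec w →
      PrimrecPred fun v => ChainBy (N v) (q v) (x v) (s v) (p v) m (w v) := by
  induction m with
  | zero => exact fun hw => Primrec.eq.comp hw hp
  | succ m ih =>
    exact fun hw => (ih (prim_left hw)).and (prim_holdsBy hN hq hx hs m (prim_right hw))

/-! ### Complexity and time-bounded complexity -/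

open Nat.Partrec.Code in
/-- Composition costs a factor two in length, since `Nat.pair` squares the larger argument. -/
theorem codeLength_comp (f g : Code) :
    codeLength (comp f g) ≤ 2 * max (codeLength f) (codeLength g) + 3 := by
  unfold codeLength
  set m := max (Nat.size (Encodable.encode f)) (Nat.size (Encodable.encode g)) with hm
  have hf : Encodable.encode f < 2 ^ m := Nat.size_le.1 (le_max_left _ _)
  have hg : Encodable.encode g < 2 ^ m := Nat.size_le.1 (le_max_right _ _)
  have h1 := Nat.pair_lt_max_add_one_sq (Encodable.encode f) (Encodable.encode g)
  have h2 : (max (Encodable.encode f) (Encodable.encode g) + 1) ^ 2 ≤ (2 ^ m) ^ 2 :=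
    Nat.pow_le_pow_left (by omega) 2
  have h3 : 2 ^ (2 * m + 3) = 8 * (2 ^ m) ^ 2 := by ring
  rw [Nat.size_le, h3]
  have h4 : Encodable.encode (comp f g) =
      2 * (2 * Nat.pair (Encodable.encode f) (Encodable.encode g) + 1) + 4 := rfl
  omega

open Nat.Partrec.Code in
theorem codeLength_pair (f g : Code) :
    codeLength (pair f g) ≤ 2 * max (codeLength f) (codeLength g) + 3 := by
  refine le_trans (Nat.size_le_size ?_) (codeLength_comp f g)
  have h4 : Encodable.encode (comp f g) =
      2 * (2 * Nat.pair (Encodable.encode f) (Encodable.encode g) + 1) + 4 := rfl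
  have h5 : Encodable.encode (pair f g) =
      2 * (2 * Nat.pair (Encodable.encode f) (Encodable.encode g)) + 4 := rfl
  omega

theorem K_le {x : ℕ} {e : Code} (h : e.eval 0 = Part.some x) : K x ≤ codeLength e :=
  Nat.sInf_le ⟨e, le_rfl, h⟩

theorem K_attained (x : ℕ) : ∃ e : Code, codeLength e ≤ K x ∧ e.eval 0 = Part.some x :=
  Nat.sInf_mem (s := {ℓ : ℕ | ∃ e : Code, codeLength e ≤ ℓ ∧ e.eval 0 = Part.some x})
    ⟨_, Code.const x, le_rfl, Code.eval_const x 0⟩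

theorem K_le_Kt (T x : ℕ) : (K x : ℕ∞) ≤ Kt T x := by
  refine le_sInf ?_
  rintro ℓ ⟨e, he, hx⟩
  exact le_trans (by exact_mod_cast K_le (Part.eq_some_iff.2 (Code.evaln_sound hx))) he

theorem Kt_eq_of_evaln {T x : ℕ} {e : Code} (he : codeLength e ≤ K x)
    (h : Code.evaln T e 0 = some x) : Kt T x = K x :=
  le_antisymm (sInf_le ⟨e, by exact_mod_cast he, h⟩) (K_le_Kt T x)

theorem Kt_anti {S T : ℕ} (h : S ≤ T) (x : ℕ) : Kt T x ≤ Kt S x :=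
  sInf_le_sInf fun _ ⟨e, he, hx⟩ => ⟨e, he, Code.evaln_mono h hx⟩

theorem Kt_eq_of_Tn_le {n T : ℕ} (h : Tn n ≤ T) {x : ℕ} (hx : x < 2 ^ n) : Kt T x = K x := by
  have hne : {T : ℕ | ∀ x < 2 ^ n, Kt T x = (K x : ℕ∞)}.Nonempty := by
    choose e he hex using K_attained
    have hk : ∀ x, ∃ k, x ∈ Code.evaln k (e x) 0 := fun x =>
      Code.evaln_complete.1 (Part.eq_some_iff.1 (hex x))
    choose k hk using hk
    exact ⟨(Finset.range (2 ^ n)).sup k, fun x hx => Kt_eq_of_evaln (he x)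
      (Code.evaln_mono (Finset.le_sup (Finset.mem_range.2 hx)) (hk x))⟩
  have hm : ∀ x < 2 ^ n, Kt (Tn n) x = (K x : ℕ∞) := Nat.sInf_mem hne
  exact le_antisymm ((Kt_anti h x).trans (hm x hx).le) (K_le_Kt T x)

/-- `x` is not the output within `T` steps of any code of length less than `n`. -/
def Avoids (T n x : ℕ) : Prop :=
  ∀ i < 2 ^ (n - 1), Code.evaln T (Denumerable.ofNat Code i) 0 ≠ some x

/-- Beyond the stabilization time, numbers avoided within `T` steps are really complex. -/
theorem le_K_of_avoids {T n M x : ℕ} (hT : Tn n ≤ T) (hx : x < 2 ^ n)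
    (h : Avoids T M x) : M ≤ K x := by
  have h1 : (M : ℕ∞) ≤ Kt T x := by
    refine le_sInf ?_
    rintro ℓ ⟨e, he, hex⟩
    refine le_trans ?_ he
    by_contra hlt
    have hlt : codeLength e ≤ M - 1 := by
      have : codeLength e < M := by exact_mod_cast not_le.1 hlt
      omega
    exact h _ (Nat.size_le.1 hlt) (by rw [Denumerable.ofNat_encode]; exact hex)
  rw [Kt_eq_of_Tn_le hT hx] at h1
  exact_mod_cast h1

theorem avoids_K (T : ℕ) {y : ℕ} (h : 1 ≤ K y) : Avoids T (K y) y := by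
  intro i hi he
  have h1 := K_le (Part.eq_some_iff.2 (Code.evaln_sound he))
  have h2 : codeLength (Denumerable.ofNat Code i) ≤ K y - 1 := by
    rw [codeLength, Denumerable.encode_ofNat]; exact Nat.size_le.2 hi
  omega

theorem prim_two_pow {α : Type} [Primcodable α] {f : α → ℕ} (hf : Primrec f) :
    Primrec fun v => 2 ^ f v := by
  have h2 : Primrec fun m : ℕ => 2 ^ m := by
    refine (Primrec.nat_rec₁ 1 (f := fun _ ih => 2 * ih)
      (Primrec.nat_mul.comp (Primrec.const 2) Primrec.snd)).of_eq fun m => ?_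
    induction m with
    | zero => rfl
    | succ m ih => rw [pow_succ, ← ih]; simp [mul_comm]
  exact h2.comp hf

theorem primrec_avoids : PrimrecRel fun v y : ℕ => Avoids v.unpair.1 v.unpair.2 y := by
  have hR : PrimrecRel fun (i : ℕ) (b : ℕ × ℕ) =>
      ¬ Code.evaln b.1.unpair.1 (Denumerable.ofNat Code i) 0 = some b.2 := by
    refine PrimrecPred.not (Primrec.eq.comp (Code.primrec_evaln.comp
      (((prim_left (Primrec.fst.comp Primrec.snd)).pair
        ((Primrec.ofNat Code).comp Primrec.fst)).pair (Primrec.const 0))) ?_)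
    exact Primrec.option_some.comp (Primrec.snd.comp Primrec.snd)
  exact prim_forall_lt hR (prim_two_pow (Primrec.nat_sub.comp (prim_right Primrec.fst)
    (Primrec.const 1)))

/-- The constant `n` has a code of length linear in the number of digits of `n`, built from
iterated unpairing: unpairing halves the number of digits while `Code.pair` doubles lengths. -/
theorem exists_short_const (n : ℕ) : ∃ e : Code, (∀ m, e.eval m = Part.some n) ∧
    codeLength e + 4 ≤ 40 * (max (Nat.size n) 2 - 1) := by
  induction n using Nat.strong_induction_on with
  | _ n ih =>
    rcases lt_or_ge n 4 with h | h
    · refine ⟨Code.const n, Code.eval_const n, ?_⟩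
      have hl : codeLength (Code.const n) ≤ 36 := by
        have h0 : codeLength (Code.const 0) ≤ 0 := by
          simp [codeLength, Code.const, Code.encodeCode_eq, Code.encodeCode]
        have hs : codeLength Code.succ ≤ 1 := by
          simp [codeLength, Code.encodeCode_eq, Code.encodeCode]
        have h1 := codeLength_comp Code.succ (Code.const 0)
        have h2 := codeLength_comp Code.succ (Code.const 1)
        have h3 := codeLength_comp Code.succ (Code.const 2)
        change codeLength (Code.const 1) ≤ _ at h1
        change codeLength (Code.const 2) ≤ _ at h2
        change codeLength (Code.const 3) ≤ _ at h3
        interval_cases n <;> omega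
      omega
    · set a := n.unpair.1 with ha
      set b := n.unpair.2 with hb
      have hn : Nat.pair a b = n := Nat.pair_unpair n
      have hmax : max a b ^ 2 ≤ n := by
        rw [← hn, Nat.pair]
        split_ifs with hab
        · rw [max_eq_right hab.le]; nlinarith
        · rw [max_eq_left (not_lt.1 hab)]; nlinarith
      have hs : ∀ c, c ≤ max a b → 2 * Nat.size c ≤ Nat.size n + 1 := by
        intro c hc
        rcases Nat.eq_zero_or_pos (Nat.size c) with h0 | h0
        · omega
        have h1 : 2 ^ (Nat.size c - 1) ≤ c := Nat.lt_size.1 (by omega)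
        have h2 : 2 ^ (2 * (Nat.size c - 1)) ≤ n := by
          calc 2 ^ (2 * (Nat.size c - 1)) = (2 ^ (Nat.size c - 1)) ^ 2 := by ring
            _ ≤ max a b ^ 2 := Nat.pow_le_pow_left (h1.trans hc) 2
            _ ≤ n := hmax
        have := Nat.lt_size.2 h2
        omega
      have hlt : ∀ c, c ≤ max a b → c < n := by
        intro c hc
        by_contra hcn
        have : n ≤ max a b := (not_lt.1 hcn).trans hc
        nlinarith
      have hsn : 3 ≤ Nat.size n := Nat.lt_size.2 (by simpa using h)
      obtain ⟨ea, hea, la⟩ := ih a (hlt a (le_max_left _ _))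
      obtain ⟨eb, heb, lb⟩ := ih b (hlt b (le_max_right _ _))
      refine ⟨Code.pair ea eb, fun m => ?_, ?_⟩
      · simp [Code.eval, hea, heb, hn, Seq.seq]
      · have h1 := codeLength_pair ea eb
        have h2 := hs a (le_max_left _ _)
        have h3 := hs b (le_max_right _ _)
        omega

/-! ### Decoding the least avoiding number -/

theorem pair_eval_of_eq {a b : Code} {n u v : ℕ} (h1 : a.eval n = Part.some u)
    (h2 : b.eval n = Part.some v) : (Code.pair a b).eval n = Part.some (Nat.pair u v) := by
  simp [Code.eval, h1, h2, Seq.seq]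

theorem prim_left_iterate (m : ℕ) : Primrec fun w => (fun y => (Nat.unpair y).1)^[m] w := by
  induction m with
  | zero => exact Primrec.id
  | succ m ih =>
    simp only [Function.iterate_succ', Function.comp]
    exact prim_left ih

/-- If the chain carries at least `U (2 ^ L)` data, then one of its elements points to a given
number `T` of complexity at most `L`, and the code carrying it computes the least number avoided
within `T` steps by all codes of length less than `M`. The parameters `M`, `L`, `N`, `q` of this
decoding are carried by the start `p` of the chain. -/
theorem exists_decoder (m : ℕ) : ∃ B, ∀ N q M L T x p : ℕ, B ≤ grow^[q] N → 1 ≤ M →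
    p = Nat.pair M (Nat.pair L (Nat.pair N q)) →
    (∃ e ∈ below (grow^[q] N), e.eval 0 = Part.some (Nat.pair x p)) →
    U (2 ^ L) ≤ (chain (fun i => grow^[i + q] N) x p (m + 1)).card → K T ≤ L →
    (∃ y, Avoids T M y) → ∃ y, Avoids T M y ∧ (∀ y', Avoids T M y' → y ≤ y') ∧
      ∃ e ∈ below (grow^[m + 1 + q] N), e.eval 0 = Part.some y := by
  classical
  have hRA : PrimrecRel fun P u : ℕ => ChainBy P.unpair.2.unpair.2.unpair.2.unpair.1
      P.unpair.2.unpair.2.unpair.2.unpair.2 P.unpair.1 u.unpair.1 P.unpair.2 (m + 1)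
      u.unpair.2 := by
    have h1 := prim_right (α := ℕ × ℕ) Primrec.fst
    have h2 := prim_right (prim_right h1)
    exact prim_chainBy (prim_left h2) (prim_right h2) (prim_left Primrec.fst)
      (prim_left Primrec.snd) h1 (m + 1) (prim_right Primrec.snd)
  have hRB : PrimrecRel fun P u : ℕ => ∃ e < 2 ^ P.unpair.2.unpair.2.unpair.1,
      Code.evaln u.unpair.1 (Denumerable.ofNat Code e) 0 = some u.unpair.2 :=
    prim_outputBy (α := ℕ × ℕ)
      (prim_two_pow (prim_left (prim_right (prim_right Primrec.fst)))) (Primrec.const 0)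
      (prim_left Primrec.snd) (prim_right Primrec.snd)
  obtain ⟨h, hh⟩ := exists_onto_code hRA hRB
  obtain ⟨F, hF⟩ := exists_rfind_code primrec_avoids
  have hw := (prim_left_iterate (m + 1)).comp (prim_right (Primrec.id (α := ℕ)))
  obtain ⟨r, hr⟩ := exists_code_of_primrec (prim_pair (prim_pair (prim_left (Primrec.id (α := ℕ)))
    hw) (prim_right (Primrec.id (α := ℕ))))
  obtain ⟨r2, hr2⟩ := exists_code_of_primrec (prim_left hw)
  obtain ⟨B, hB⟩ := exists_chain_code_comp m (Code.comp F (Code.pair (Code.comp h r) r2))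
  refine ⟨B, fun N q M L T x p hBN hM hp he hU hK hav => ?_⟩
  have hp1 : 1 ≤ p := hp ▸ hM.trans (Nat.left_le_pair _ _)
  -- the numbers of complexity at most `L` are enumerated by `RB`
  have hout : ∀ z, z ∈ outs ev (below (2 ^ L)) (ask 0 leaf) ↔
      ∃ e < 2 ^ L, z ∈ (Denumerable.ofNat Code e).eval 0 := by
    intro z
    rw [mem_outs]
    constructor
    · rintro ⟨e, he, hz⟩
      refine ⟨Encodable.encode e, mem_below.1 he, ?_⟩
      rw [Denumerable.ofNat_encode]
      have : ev e 0 = some z := by simpa [run] using hz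
      exact ev_eq_some.1 this
    · rintro ⟨e, he, hz⟩
      refine ⟨Denumerable.ofNat Code e, mem_below.2 (by simpa using he), ?_⟩
      have := ev_eq_some.2 hz
      simp [run, this]
  have hT : T ∈ outs ev (below (2 ^ L)) (ask 0 leaf) := by
    obtain ⟨e, he, heT⟩ := K_attained T
    refine (hout T).2 ⟨Encodable.encode e, Nat.size_le.1 (he.trans hK), ?_⟩
    rw [Denumerable.ofNat_encode, heT]
    exact Part.mem_some T
  obtain ⟨w, hwA, hwT⟩ := hh (Nat.pair x p) (chain (fun i => grow^[i + q] N) x p (m + 1))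
    (outs ev (below (2 ^ L)) (ask 0 leaf))
    (fun z => by
      rw [mem_chain_iff_chainBy]
      simp [hp])
    (fun z => by
      rw [hout]
      simp only [hp, Nat.unpair_pair]
      constructor
      · rintro ⟨e, he, hz⟩
        obtain ⟨s, hs⟩ := Code.evaln_complete.1 hz
        exact ⟨s, e, he, hs⟩
      · rintro ⟨s, e, he, hs⟩
        exact ⟨e, he, Code.evaln_sound hs⟩)
    ((card_outs_le_cap ev _ _).trans hU) T hT
  obtain ⟨e, he, hev⟩ := hB (fun i => grow^[i + q] N) (by simpa using hBN)
    (fun i => by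
      have : i + 1 + q = (i + q) + 1 := by omega
      simp only [this, Function.iterate_succ', Function.comp]; exact le_rfl)
    x p hp1 (by simpa using he) w hwA
  have hl := left_iterate_of_mem_chain hwA
  obtain ⟨y0, hy0⟩ := hav
  obtain ⟨y, h1, h2, h3⟩ := hF (Nat.pair T M) y0 (by simpa using hy0)
  simp only [Nat.unpair_pair] at h1 h2
  refine ⟨y, h1, h2, e, he, ?_⟩
  rw [hev, ← h3]
  refine eval_comp_of_eq (pair_eval_of_eq ?_ ?_)
  · rw [← hwT]
    refine eval_comp_of_eq ?_
    rw [hr]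
    simp only [id, Nat.unpair_pair, hl]
  · rw [hr2]
    simp only [id, Nat.unpair_pair, hl, hp]

/-! ### The number of data carried by a chain -/

theorem sum_frac_ge (m : ℕ) :
    (2 : ℝ) ^ m - 32 / 21 * (7 / 4) ^ m ≤ ∑ i ∈ Finset.range m, 2 ^ i * frac i := by
  induction m with
  | zero => norm_num
  | succ m ih =>
    rw [Finset.sum_range_succ, pow_succ, pow_succ]
    have h1 := mul_le_mul_of_nonneg_left (frac_ge m) (by positivity : (0 : ℝ) ≤ 2 ^ m)
    have h2 : (2 : ℝ) ^ m * (7 / 8) ^ m = (7 / 4) ^ m := by rw [← mul_pow]; norm_num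
    nlinarith

theorem exists_sum_frac_ge {θ : ℝ} (h : θ < 1) :
    ∃ m : ℕ, θ * 2 ^ (m + 1) ≤ ∑ i ∈ Finset.range (m + 1), 2 ^ i * frac i := by
  obtain ⟨m, hm⟩ := exists_pow_lt_of_lt_one (by linarith : 0 < (1 - θ) / 2)
    (by norm_num : (7 / 8 : ℝ) < 1)
  refine ⟨m, le_trans ?_ (sum_frac_ge (m + 1))⟩
  have h1 : (7 / 4 : ℝ) ^ (m + 1) = 2 ^ (m + 1) * (7 / 8) ^ (m + 1) := by
    rw [← mul_pow]; norm_num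
  have h2 : (7 / 8 : ℝ) ^ (m + 1) ≤ (1 - θ) / 2 := by
    rw [pow_succ]
    have : (0 : ℝ) < (7 / 8) ^ m := by positivity
    linarith
  have h3 : (0 : ℝ) < 2 ^ (m + 1) := by positivity
  rw [h1]
  nlinarith

theorem two_le_grow_iterate {N : ℕ} (hN : 2 ≤ N) (i : ℕ) : 2 ≤ grow^[i] N := by
  induction i with
  | zero => simpa using hN
  | succ i ih =>
    rw [Function.iterate_succ', Function.comp]
    exact ih.trans (lt_grow _).le

/-- A chain built on `N` carries at least a fraction `θ` of the `2 ^ (q + m + 1) * tau x N` bits that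
its size would allow at best. -/
theorem logb_card_chain_ge {m : ℕ} {θ : ℝ}
    (h : θ * 2 ^ (m + 1) ≤ ∑ i ∈ Finset.range (m + 1), 2 ^ i * frac i) {N : ℕ} (hN : 2 ≤ N)
    (q x p : ℕ) : θ * (2 ^ (q + (m + 1)) * tau x N) ≤
      Real.logb 2 (chain (fun i => grow^[i + q] N) x p (m + 1)).card := by
  set ν : ℕ → ℕ := fun i => grow^[i + q] N with hν
  have h2 : ∀ i, 2 ≤ ν i := fun i => two_le_grow_iterate hN _
  have hg : ∀ i, grow (ν i) ≤ ν (i + 1) := fun i => by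
    have : i + 1 + q = (i + q) + 1 := by omega
    simp only [hν, this, Function.iterate_succ', Function.comp]; exact le_rfl
  have h0 : 2 ^ q * tau x N ≤ tau x (ν 0) := by
    have := tau_pow_le (ν := fun i => grow^[i] N)
      (fun i => by simp only [Function.iterate_succ', Function.comp]; exact le_rfl)
      (fun i => two_le_grow_iterate hN i) x 0 q
    simpa [hν] using this
  rw [logb_card_chain h2]
  have hz : ∀ i, 2 ^ i * frac i * tau x (ν 0) ≤ zeta ν x i := by
    intro i
    have := zeta_ge (ν := ν) h2 (a := x) (Λ := fun i => 2 ^ i * tau x (ν 0)) (τ := 1) (i0 := 0)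
      (J := i) (by norm_num) (fun i => by rw [pow_succ]; linarith)
      (fun i _ _ => by simpa using tau_pow_le hg h2 x 0 i) i (by omega)
    simp only [Nat.zero_add] at this
    linarith
  have h1 := Finset.sum_le_sum fun i (_ : i ∈ Finset.range (m + 1)) => hz i
  refine le_trans ?_ h1
  rw [← Finset.sum_mul]
  have ht := tau_nonneg x (ν 0)
  have h3 := mul_le_mul_of_nonneg_right h ht
  have h4 : (0 : ℝ) ≤ ∑ i ∈ Finset.range (m + 1), 2 ^ i * frac i :=
    Finset.sum_nonneg fun i _ => mul_nonneg (by positivity) (frac_nonneg i)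
  rcases le_or_gt 0 θ with hθ | hθ
  · have h5 := mul_le_mul_of_nonneg_left h0 (by positivity : 0 ≤ θ * 2 ^ (m + 1))
    rw [pow_add]
    nlinarith
  · have h6 : θ * (2 ^ (q + (m + 1)) * tau x N) ≤ 0 :=
      mul_nonpos_of_nonpos_of_nonneg hθ.le (mul_nonneg (by positivity) (tau_nonneg _ _))
    exact h6.trans (mul_nonneg h4 ht)

/-! ### Iterating `grow` -/

theorem grow_iterate_mono (k : ℕ) {a b : ℕ} (h : a ≤ b) : grow^[k] a ≤ grow^[k] b :=
  Monotone.iterate (fun _ _ h => grow_mono h) k h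

theorem le_grow_iterate {i j : ℕ} (h : i ≤ j) (a : ℕ) : grow^[i] a ≤ grow^[j] a := by
  induction j, h using Nat.le_induction with
  | base => exact le_rfl
  | succ j _ ih =>
    rw [Function.iterate_succ', Function.comp]
    exact ih.trans (lt_grow _).le

theorem two_pow_le_grow_iterate {a : ℕ} (ha : 2 ≤ a) (k : ℕ) : 2 ^ 2 ^ k ≤ grow^[k] a := by
  induction k with
  | zero => simpa using ha
  | succ k ih =>
    rw [Function.iterate_succ', Function.comp, grow, pow_succ, pow_mul]
    have := Nat.pow_le_pow_left ih 2
    omega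

theorem grow_iterate_le {a : ℕ} (ha : 2 ≤ a) (k : ℕ) : 5 * grow^[k] a ≤ (5 * a) ^ 2 ^ k := by
  induction k with
  | zero => simp
  | succ k ih =>
    have h2 := two_le_grow_iterate ha k
    rw [Function.iterate_succ', Function.comp, pow_succ, pow_mul]
    have := Nat.pow_le_pow_left ih 2
    refine le_trans ?_ this
    rw [grow]
    nlinarith

/-- The relative gap between the orbits of `a` and `a + 1` grows at least like `(3 / 2) ^ k`. -/
theorem grow_iterate_gap {a : ℕ} (ha : 2 ≤ a) (k : ℕ) :
    ∃ d, grow^[k] (a + 1) = grow^[k] a + d ∧ 1 ≤ d ∧ 3 ^ k * grow^[k] a ≤ 2 ^ k * (a * d) := by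
  induction k with
  | zero => exact ⟨1, by simp⟩
  | succ k ih =>
    obtain ⟨d, h1, h2, h3⟩ := ih
    have hs := two_le_grow_iterate ha k
    simp only [Function.iterate_succ', Function.comp, h1]
    set s := grow^[k] a
    refine ⟨4 * d * (2 * s + d), by unfold grow; ring, by nlinarith, ?_⟩
    calc 3 ^ (k + 1) * grow s = 3 ^ k * (12 * (s ^ 2 + 1)) := by unfold grow; ring
      _ ≤ 3 ^ k * (8 * s * (2 * s + d)) := Nat.mul_le_mul_left _ (by nlinarith)
      _ = (3 ^ k * s) * (8 * (2 * s + d)) := by ring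
      _ ≤ (2 ^ k * (a * d)) * (8 * (2 * s + d)) := Nat.mul_le_mul_right _ h3
      _ = 2 ^ (k + 1) * (a * (4 * d * (2 * s + d))) := by ring

theorem two_mul_grow_iterate_le {a k : ℕ} (ha : 2 ≤ a) (hk : 2 * a ≤ k) :
    2 * grow^[k] a ≤ grow^[k] (a + 1) := by
  obtain ⟨d, h1, -, h3⟩ := grow_iterate_gap ha k
  have h4 : ∀ k : ℕ, 2 ^ k * (k + 2) ≤ 2 * 3 ^ k := by
    intro k
    induction k with
    | zero => norm_num
    | succ k ih =>
      rw [pow_succ, pow_succ]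
      have : 0 < 2 ^ k := by positivity
      nlinarith
  have h5 : 2 ^ k * a ≤ 3 ^ k := by
    have := h4 k
    have : 2 ^ k * (2 * a) ≤ 2 ^ k * (k + 2) := Nat.mul_le_mul_left _ (by omega)
    nlinarith
  have h6 : (2 ^ k * a) * grow^[k] a ≤ (2 ^ k * a) * d :=
    (Nat.mul_le_mul_right _ h5).trans (by rw [mul_assoc]; exact h3)
  have h7 := Nat.le_of_mul_le_mul_left h6 (by positivity)
  omega

/-- Every large number is comparable to a number in a fixed range, iterated. -/
theorem exists_grow_iterate {A : ℕ} (hA : 1 ≤ A) (X : ℕ) : A ≤ X → ∃ k N, A ≤ N ∧ N < grow A ∧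
    grow^[k] N ≤ X ∧ X < grow^[k] (N + 1) ∧ Lam X ≤ 2 ^ k * Lam N := by
  induction X using Nat.strong_induction_on with
  | _ X ih =>
    intro hX
    rcases lt_or_ge X (grow A) with h | h
    · exact ⟨0, X, hX, h, by simp, by simp, by simp⟩
    · have h4 : 4 ≤ X := le_trans (by unfold grow; omega) h
      have hr := le_root h
      obtain ⟨k, N, h1, h2, h3, h5, h6⟩ := ih _ (root_lt h4) hr
      refine ⟨k + 1, N, h1, h2, ?_, ?_, ?_⟩
      · rw [Function.iterate_succ', Function.comp]
        exact (grow_mono h3).trans (grow_root_le h4)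
      · rw [Function.iterate_succ', Function.comp]
        exact (lt_grow_root X).trans_le (grow_mono h5)
      · have := Lam_le_two_mul (hA.trans hr) (by omega) (lt_grow_root X).le
        rw [pow_succ]
        linarith

theorem exists_linear_le_two_pow (c : ℕ) : ∃ q0, ∀ q, q0 ≤ q → c * (q + 1) ≤ 2 ^ q := by
  refine ⟨2 * c + 2, fun q hq => ?_⟩
  induction q, hq using Nat.le_induction with
  | base =>
    have h1 : c < 2 ^ c := Nat.lt_two_pow_self
    have h2 : 2 ^ (2 * c + 2) = 4 * (2 ^ c * 2 ^ c) := by ring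
    rw [h2]
    nlinarith
  | succ q _ ih => rw [pow_succ]; nlinarith

/-! ### Conclusion -/

theorem two_pow_le_U {n M : ℕ} (h : ∀ y < 2 ^ n, K y ≤ M) : 2 ^ n ≤ U (2 ^ M) := by
  refine le_trans ?_ (card_outs_le_cap ev (below (2 ^ M)) (ask 0 leaf))
  have : Finset.range (2 ^ n) ⊆ outs ev (below (2 ^ M)) (ask 0 leaf) := by
    intro y hy
    obtain ⟨e, he, hey⟩ := K_attained y
    refine mem_outs.2 ⟨e, mem_below.2 (Nat.size_le.1 (he.trans (h y (Finset.mem_range.1 hy)))), ?_⟩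
    simp [run, ev_of_eval hey]
  simpa using Finset.card_le_card this

/-- The number coding the start of a chain has few digits, so a small code outputs it. -/
theorem exists_start_code {x M L N q k D d a : ℕ} (hD : D ≤ 2 ^ d) (hx : x < 2 ^ k * D)
    (hM : M < 2 ^ k * D) (hL : L < 2 ^ k * D) (hN : N < 2 ^ k * D) (hq : q < 2 ^ k * D)
    (hk : 640 * (k + d + 1) ≤ 2 ^ q) (ha : 2 ≤ a) : ∃ e ∈ below (grow^[q] a), e.eval 0 =
      Part.some (Nat.pair x (Nat.pair M (Nat.pair L (Nat.pair N q)))) := by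
  set W := 2 ^ k * D with hW
  have hW1 : 1 ≤ W := by omega
  have hp : ∀ i j, i ≤ j → W ^ i ≤ W ^ j := fun i j h => Nat.pow_le_pow_right hW1 h
  have h1 : Nat.pair N q < W ^ 2 := pair_lt_sq_iff.2 ⟨hN, hq⟩
  have h2 : Nat.pair L (Nat.pair N q) < W ^ 4 := by
    rw [show W ^ 4 = (W ^ 2) ^ 2 by ring]
    exact pair_lt_sq_iff.2 ⟨hL.trans_le (by simpa using hp 1 2 (by norm_num)), h1⟩
  have h3 : Nat.pair M (Nat.pair L (Nat.pair N q)) < W ^ 8 := by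
    rw [show W ^ 8 = (W ^ 4) ^ 2 by ring]
    exact pair_lt_sq_iff.2 ⟨hM.trans_le (by simpa using hp 1 4 (by norm_num)), h2⟩
  have h4 : Nat.pair x (Nat.pair M (Nat.pair L (Nat.pair N q))) < W ^ 16 := by
    rw [show W ^ 16 = (W ^ 8) ^ 2 by ring]
    exact pair_lt_sq_iff.2 ⟨hx.trans_le (by simpa using hp 1 8 (by norm_num)), h3⟩
  set v := Nat.pair x (Nat.pair M (Nat.pair L (Nat.pair N q)))
  have h5 : W ^ 16 ≤ 2 ^ (16 * (k + d)) := by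
    rw [mul_comm, pow_mul, pow_add]
    exact Nat.pow_le_pow_left (Nat.mul_le_mul_left _ hD) 16
  have h6 : Nat.size v ≤ 16 * (k + d) := Nat.size_le.2 (h4.trans_le h5)
  obtain ⟨e, he, hle⟩ := exists_short_const v
  refine ⟨e, mem_below.2 ?_, he 0⟩
  have h7 : codeLength e ≤ 2 ^ q := by omega
  exact (Nat.size_le.1 (show Nat.size (Encodable.encode e) ≤ 2 ^ q from h7)).trans_le
    (two_pow_le_grow_iterate ha q)

set_option maxHeartbeats 1000000 in
/-- every `T ≥ Tn n` has complexity at least `n - O(log n)`: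
there is a constant `c` with `K T + c * Nat.size n ≥ n` for all `n ≥ 1` and `T ≥ Tn n`. -/
theorem complexity_of_stabilization_time :
    ∃ c : ℕ, ∀ n : ℕ, 1 ≤ n → ∀ T : ℕ, Tn n ≤ T → n ≤ K T + c * Nat.size n := by
  obtain ⟨ρ, hρ0, hρ1, C, hC⟩ := exists_rate
  -- `τ` and `θ` are chosen with `ρ ≤ θ * τ`
  set τ : ℝ := (1 + ρ) / 2 with hτ
  have hτ1 : τ < 1 := by rw [hτ]; linarith
  have hτ0 : 0 < τ := by rw [hτ]; linarith
  have hρτ : ρ ≤ τ * τ := by rw [hτ]; nlinarith [sq_nonneg (1 - ρ)]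
  obtain ⟨m, hm⟩ := exists_sum_frac_ge hτ1
  obtain ⟨B1, hB1⟩ := exists_decoder m
  obtain ⟨B2, hB2⟩ := exists_point hτ0.le hτ1
  choose! xf hxf using hB2
  set A := max B1 (max B2 2) + 1 with hA
  set G := grow A with hG
  set Xb := (Finset.range G).sup xf with hXb
  set D := 5 * (G + 1) + Xb + 2 with hD
  obtain ⟨q0, hq0⟩ := exists_linear_le_two_pow (640 * (m + 3 + D))
  obtain ⟨C', hC'⟩ := exists_nat_ge (C / ρ)
  set k0 := 2 * G + q0 + m + 1 with hk0
  refine ⟨grow^[k0] (G + 1) + C' + 1, fun n hn T hT => ?_⟩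
  by_contra hcon
  set L := K T with hL
  have hs : 1 ≤ Nat.size n := Nat.size_pos.2 hn
  have hbig : L + (grow^[k0] (G + 1) + C' + 1) < n := by
    have := Nat.le_mul_of_pos_right (grow^[k0] (G + 1) + C' + 1) hs
    omega
  -- a number below `2 ^ n` of maximal complexity
  obtain ⟨y0, hy0, hmax⟩ := Finset.exists_max_image (Finset.range (2 ^ n)) K
    ⟨0, Finset.mem_range.2 (by positivity)⟩
  rw [Finset.mem_range] at hy0
  set M := K y0 with hM
  have hU : 2 ^ n ≤ U (2 ^ M) := two_pow_le_U fun y hy => hmax y (Finset.mem_range.2 hy)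
  have hnM : n ≤ M := (Nat.pow_le_pow_iff_right (by norm_num : 1 < 2)).1 (hU.trans (U_le _))
  have hAG : A < G := lt_grow A
  have hG0 : G + 1 ≤ grow^[k0] (G + 1) := le_grow_iterate (i := 0) (Nat.zero_le k0) _
  have hMlt : M < 2 ^ M := Nat.lt_two_pow_self
  obtain ⟨k, N0, h1, h2, h3, h4, h5⟩ := exists_grow_iterate (by omega : 1 ≤ A) (2 ^ M) (by omega)
  have hkk : k0 ≤ k := by
    by_contra hlt
    have a1 := grow_iterate_mono k (show N0 + 1 ≤ G + 1 by omega)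
    have a2 := le_grow_iterate (show k ≤ k0 by omega) (G + 1)
    omega
  obtain ⟨N, rfl⟩ : ∃ N, N0 = N + 1 := ⟨N0 - 1, by omega⟩
  have hNB1 : B1 ≤ N := by omega
  have hNB2 : B2 ≤ N := by omega
  have hN2 : 2 ≤ N := by omega
  obtain ⟨q, rfl⟩ : ∃ q, k = q + (m + 1) := ⟨k - (m + 1), by omega⟩
  set k := q + (m + 1) with hk
  -- passing from `N + 1` to `N` saves one bit
  have hhalf : grow^[k] N ≤ 2 ^ (M - 1) := by
    have a1 := two_mul_grow_iterate_le hN2 (show 2 * N ≤ k by omega)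
    have a2 : 2 ^ M = 2 * 2 ^ (M - 1) := by rw [← pow_succ']; congr 1; omega
    omega
  have hMk : M ≤ 2 ^ k * (5 * (G + 1)) := by
    have a1 := grow_iterate_le (show 2 ≤ N + 1 + 1 by omega) k
    have a2 : (5 * (N + 1 + 1)) ^ 2 ^ k ≤ (5 * (G + 1)) ^ 2 ^ k :=
      Nat.pow_le_pow_left (by omega) _
    have a3 : (5 * (G + 1)) ^ 2 ^ k ≤ (2 ^ (5 * (G + 1))) ^ 2 ^ k :=
      Nat.pow_le_pow_left Nat.lt_two_pow_self.le _
    rw [← pow_mul, mul_comm (5 * (G + 1)) (2 ^ k)] at a3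
    exact (Nat.pow_le_pow_iff_right (by norm_num : 1 < 2)).1
      (show 2 ^ M ≤ 2 ^ (2 ^ k * (5 * (G + 1))) by omega)
  have hx := hxf N hNB2
  set x := xf N with hxN
  have hxX : x ≤ Xb := Finset.le_sup (f := xf) (Finset.mem_range.2 (by omega))
  set p := Nat.pair M (Nat.pair L (Nat.pair N q)) with hp
  have hstart : ∃ e ∈ below (grow^[q] N), e.eval 0 = Part.some (Nat.pair x p) := by
    have hpos : 1 ≤ 2 ^ k := Nat.one_le_two_pow
    have hkl : k < 2 ^ k := Nat.lt_two_pow_self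
    have e1 : 2 ^ k * D = 2 ^ k * (5 * (G + 1)) + 2 ^ k * Xb + 2 ^ k * 2 := by rw [hD]; ring
    have e2 : Xb ≤ 2 ^ k * Xb := Nat.le_mul_of_pos_left _ hpos
    have e3 : 5 * (G + 1) ≤ 2 ^ k * (5 * (G + 1)) := Nat.le_mul_of_pos_left _ hpos
    have e4 : ∀ z, z ≤ 2 ^ k * (5 * (G + 1)) + 2 ^ k * Xb + 2 ^ k → z < 2 ^ k * D := by
      intro z hz
      rw [e1]
      linarith
    refine exists_start_code (d := D) (D := D) Nat.lt_two_pow_self.le (e4 x (by linarith))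
      (e4 M (by linarith)) (e4 L (by linarith)) (e4 N (by linarith)) (e4 q (by linarith)) ?_ hN2
    refine le_trans ?_ (hq0 q (by omega))
    rw [mul_assoc]
    refine Nat.mul_le_mul_left _ ?_
    have e5 : q ≤ (m + 3 + D) * q := Nat.le_mul_of_pos_left _ (by omega)
    rw [mul_add, mul_one]
    linarith
  have hcard : U (2 ^ L) ≤ (chain (fun i => grow^[i + q] N) x p (m + 1)).card := by
    have b1 := logb_card_chain_ge hm hN2 q x p
    have b2 := hC L
    have b3 : (n : ℝ) ≤ Lam (2 ^ M) := by
      have c1 : ((2 : ℝ) ^ n) ≤ U (2 ^ M) := by exact_mod_cast hU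
      have c2 := Real.logb_le_logb_of_le (b := 2) (by norm_num) (by positivity) c1
      rw [Real.logb_pow, Real.logb_self_eq_one (by norm_num)] at c2
      unfold Lam
      linarith
    have b4 : (n : ℝ) ≤ 2 ^ k * Lam (N + 1) := b3.trans h5
    have b5 : τ * n ≤ 2 ^ k * tau x N := by
      have c1 := mul_le_mul_of_nonneg_left hx (by positivity : (0 : ℝ) ≤ 2 ^ k)
      have c2 := mul_le_mul_of_nonneg_left b4 hτ0.le
      nlinarith
    have b6 : τ * (τ * n) ≤ τ * (2 ^ k * tau x N) := mul_le_mul_of_nonneg_left b5 hτ0.le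
    have b7 : ρ * n ≤ τ * (τ * n) := by
      rw [← mul_assoc]
      exact mul_le_mul_of_nonneg_right hρτ (by positivity)
    have b8 : ρ * L + C ≤ ρ * n := by
      have c1 : ((L : ℝ) + C') ≤ n := by exact_mod_cast (by omega : L + C' ≤ n)
      have c2 : C ≤ C' * ρ := (div_le_iff₀ hρ0).1 hC'
      nlinarith
    have b9 : Real.logb 2 (U (2 ^ L)) ≤
        Real.logb 2 (chain (fun i => grow^[i + q] N) x p (m + 1)).card := by linarith
    have d1 : (0 : ℝ) < U (2 ^ L) := by exact_mod_cast U_pos Nat.one_le_two_pow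
    have d2 : (0 : ℝ) < (chain (fun i => grow^[i + q] N) x p (m + 1)).card := by
      exact_mod_cast card_chain_pos (fun i => two_le_grow_iterate hN2 _) x p (m + 1)
    exact_mod_cast (Real.logb_le_logb (by norm_num) d1 d2).1 b9
  obtain ⟨y, hy1, hy2, e, he, hey⟩ := hB1 N q M L T x p
    (hNB1.trans (le_grow_iterate (i := 0) (Nat.zero_le q) N)) (by omega) rfl hstart hcard le_rfl
    ⟨y0, avoids_K T (by omega)⟩
  have hyn : y < 2 ^ n := (hy2 y0 (avoids_K T (by omega))).trans_lt hy0
  have hKy := le_K_of_avoids hT hyn hy1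
  have hKe : K y ≤ M - 1 := by
    refine (K_le hey).trans (Nat.size_le.2 ((mem_below.1 he).trans_le ?_))
    rw [show m + 1 + q = k by omega]
    exact hhalf
  omega
end

section
/- For every n : ℕ and t : ℕ, let x(n,t) be the least x < 2^n maximizing K^t among {x | x < 2^n}. Then K^t(x(n,t)) ≥ n for every t; moreover, for every t ≥ T'_n one has 2·K(x(n,t)) ≥ n. -/
/-!
The first claim is a counting argument: fewer than `2 ^ n` codes have length `< n`, and each
outputs at most one number, so some `x < 2 ^ n` has `Kt t x ≥ n` (`exists_le_Kt`); the maximizer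
`xnt n t` is at least as complex. For the second claim, shortest programs for the finitely many
`x < 2 ^ n` all halt within a common time, so `Tn' n` is a minimum over a nonempty set
(`exists_time_bound`). As `Kt t x` is antitone in `t`, every `t ≥ Tn' n` then satisfies
`n ≤ Kt t (xnt n t) ≤ 2 * K (xnt n t)`.
-/

open Nat.Partrec (Code)

/-- `xnt n t`: the least `x < 2 ^ n` maximizing the time-bounded complexity `Kt t`
among all `x < 2 ^ n`. -/
noncomputable def xnt (n t : ℕ) : ℕ :=
  sInf {x : ℕ | x < 2 ^ n ∧ ∀ y < 2 ^ n, Kt t y ≤ Kt t x}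

theorem Kt_le_of_evaln {t x : ℕ} {e : Code} (h : Code.evaln t e 0 = some x) :
    Kt t x ≤ codeLength e :=
  sInf_le ⟨e, le_rfl, h⟩

theorem Kt_antitone {s t : ℕ} (hst : s ≤ t) (x : ℕ) : Kt t x ≤ Kt s x :=
  sInf_le_sInf fun _ ⟨e, he, h⟩ => ⟨e, he, Code.evaln_mono hst h⟩

/-- Counting: the codes of length `< n` are too few to produce every `x < 2 ^ n`. -/
theorem exists_le_Kt (n t : ℕ) : ∃ x < 2 ^ n, (n : ℕ∞) ≤ Kt t x := by
  by_contra! H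
  have hcode : ∀ x, ∃ e : Code, x < 2 ^ n → codeLength e < n ∧ Code.evaln t e 0 = some x := by
    intro x
    by_cases hx : x < 2 ^ n
    · obtain ⟨ℓ, ⟨e, he, h⟩, hℓ⟩ := sInf_lt_iff.1 (H x hx)
      exact ⟨e, fun _ => ⟨by exact_mod_cast he.trans_lt hℓ, h⟩⟩
    · exact ⟨Code.zero, fun h => absurd h hx⟩
  choose e he using hcode
  have hn : 0 < n := Nat.zero_lt_of_lt (he 0 (by positivity)).1
  have hcard := Finset.card_le_card_of_injOn (s := Finset.range (2 ^ n))
    (t := Finset.range (2 ^ (n - 1))) (fun x => Encodable.encode (e x)) ?_ ?_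
  · simp only [Finset.card_range] at hcard
    exact absurd hcard (not_le.2 (Nat.pow_lt_pow_right (by norm_num) (by omega)))
  · intro x hx
    have h := (he x (by simpa using hx)).1
    simp only [Finset.coe_range, Set.mem_Iio]
    exact Nat.size_le.1 (Nat.le_sub_one_of_lt h)
  · intro x hx y hy hxy
    have h1 := (he x (by simpa using hx)).2
    have h2 := (he y (by simpa using hy)).2
    rw [Encodable.encode_injective hxy, h2] at h1
    exact (Option.some_injective _ h1).symm

theorem xnt_spec (n t : ℕ) : xnt n t < 2 ^ n ∧ ∀ y < 2 ^ n, Kt t y ≤ Kt t (xnt n t) := by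
  apply Nat.sInf_mem (s := {x : ℕ | x < 2 ^ n ∧ ∀ y < 2 ^ n, Kt t y ≤ Kt t x})
  obtain ⟨x, hx, hmax⟩ := Finset.exists_max_image (Finset.range (2 ^ n)) (Kt t) ⟨0, by simp⟩
  exact ⟨x, by simpa using hx, fun y hy => hmax y (by simpa using hy)⟩

theorem exists_Kt_le_K (x : ℕ) : ∃ T, Kt T x ≤ K x := by
  obtain ⟨e, he, h⟩ := Nat.sInf_mem
    (s := {ℓ : ℕ | ∃ e : Code, codeLength e ≤ ℓ ∧ e.eval 0 = Part.some x})
    ⟨_, Code.const x, le_rfl, Code.eval_const x 0⟩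
  obtain ⟨k, hk⟩ := Code.evaln_complete.1 (Part.eq_some_iff.1 h)
  exact ⟨k, (Kt_le_of_evaln hk).trans (by exact_mod_cast he)⟩

/-- The set whose infimum is `Tn' n` is nonempty, so that infimum is not a junk value. -/
theorem exists_time_bound (n : ℕ) : ∃ T, ∀ x < 2 ^ n, Kt T x ≤ 2 * (K x : ℕ∞) := by
  choose T hT using exists_Kt_le_K
  refine ⟨(Finset.range (2 ^ n)).sup T, fun x hx => ?_⟩
  calc Kt _ x ≤ Kt (T x) x := Kt_antitone (Finset.le_sup (by simpa using hx)) x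
    _ ≤ K x := hT x
    _ ≤ 2 * (K x : ℕ∞) := by
      have h : K x ≤ 2 * K x := by omega
      exact_mod_cast h

/-- `Kt t (xnt n t) ≥ n` for every `t`; moreover, for every `t ≥ Tn' n`
one has `2 * K (xnt n t) ≥ n`. -/
theorem time_bounded_maximizer (n : ℕ) :
    (∀ t : ℕ, (n : ℕ∞) ≤ Kt t (xnt n t)) ∧
    (∀ t : ℕ, Tn' n ≤ t → n ≤ 2 * K (xnt n t)) := by
  have hmax : ∀ t : ℕ, (n : ℕ∞) ≤ Kt t (xnt n t) := fun t => by
    obtain ⟨x, hx, h⟩ := exists_le_Kt n t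
    exact h.trans ((xnt_spec n t).2 x hx)
  refine ⟨hmax, fun t ht => ?_⟩
  have hT : ∀ x < 2 ^ n, Kt (Tn' n) x ≤ 2 * (K x : ℕ∞) := Nat.sInf_mem (exists_time_bound n)
  have h := ((hmax t).trans (Kt_antitone ht _)).trans (hT _ (xnt_spec n t).1)
  exact_mod_cast h
end
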